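/- Let 1 < p ≤ 2 and let τ : D → D be injective. If for every Banach space E with the UMD property the operator T_{τ,p} ⊗ Id_E is bounded on L^p_E, then the inverse rearrangement operator is bounded on dyadic H¹, i.e. ‖T_{τ,1}^{−1}‖₁ < ∞. -/

import Mathlib

open MeasureTheory Set
open scoped ENNReal NNReal Classical

noncomputable section

/-- A dyadic subinterval of `[0,1)`: the half-open interval
`[k/2^n, (k+1)/2^n)` with `k < 2^n`. -/
structure DyadicI where
  n : ℕ
  k : ℕ
  hk : k < 2 ^ n

instance : Nonempty DyadicI := ⟨⟨0, 0, by norm_num⟩⟩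

namespace DyadicI

/-- The length `|I| = 2^{-n}` of a dyadic interval. -/
def len (I : DyadicI) : ℝ := (2 : ℝ) ^ (-(I.n : ℤ))

/-- The left endpoint `k 2^{-n}` of a dyadic interval. -/
def lep (I : DyadicI) : ℝ := (I.k : ℝ) * I.len

/-- The underlying point set `[k/2^n, (k+1)/2^n)` of a dyadic interval. -/
def toSet (I : DyadicI) : Set ℝ := Set.Ico I.lep (I.lep + I.len)

/-- The `L^∞`-normalized Haar function `h_I`: `1` on the left half of `I`,
`-1` on the right half of `I`, `0` off `I`. -/
def haar (I : DyadicI) (t : ℝ) : ℝ :=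
  if t ∈ Set.Ico I.lep (I.lep + I.len / 2) then 1
  else if t ∈ Set.Ico (I.lep + I.len / 2) (I.lep + I.len) then -1
  else 0

end DyadicI

open DyadicI

section Defs

variable {X : Type*} [NormedAddCommGroup X] [NormedSpace ℝ X]

/-- The square function `𝕊(f)` of the `X`-valued Haar expansion `f = ∑_{I ∈ s} x_I h_I`:
`𝕊(f)(t) = (E_ε ‖∑_I ε_I x_I h_I(t)‖²)^{1/2}`, the average being taken over all
choices of signs `ε_I ∈ {±1}`, `I ∈ s`. -/
def sqFn (s : Finset DyadicI) (x : DyadicI → X) (t : ℝ) : ℝ :=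
  Real.sqrt ((∑ ε : {I // I ∈ s} → Bool,
    ‖∑ I ∈ s.attach, ((if ε I then (1 : ℝ) else -1) * haar I.1 t) • x I.1‖ ^ 2) /
      2 ^ s.card)

/-- The `H^p_X` (quasi-)norm of `f = ∑_{I ∈ s} x_I h_I`:
`‖f‖ = (∫₀¹ 𝕊(f)(t)^p dt)^{1/p}`. -/
def HpNormV (p : ℝ) (s : Finset DyadicI) (x : DyadicI → X) : ℝ :=
  (∫ t in Set.Icc (0 : ℝ) 1, sqFn s x t ^ p) ^ (1 / p)

/-- The coefficients of `(T_{τ,p} ⊗ Id_X)(f)` for `f = ∑_{I ∈ s} x_I h_I`, namely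
`(T_{τ,p} ⊗ Id_X)(f) = ∑_{I ∈ s} (|I|/|τ(I)|)^{1/p} x_I h_{τ(I)}`, as a family of
coefficients indexed by the Haar support `τ(s)`. -/
def rearrCoef (τ : DyadicI → DyadicI) (p : ℝ) (s : Finset DyadicI) (x : DyadicI → X) :
    DyadicI → X :=
  fun J => ∑ I ∈ s, if τ I = J then ((len I / len (τ I)) ^ (1 / p)) • x I else 0

/-- The scalar dyadic square function `S(f) = (∑_I a_I² 1_I)^{1/2}`
of `f = ∑_{I ∈ s} a_I h_I`. -/
def sqFnS (s : Finset DyadicI) (a : DyadicI → ℝ) (t : ℝ) : ℝ :=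
  Real.sqrt (∑ I ∈ s, a I ^ 2 * Set.indicator (toSet I) (fun _ => (1 : ℝ)) t)

/-- The scalar dyadic `H^p` (quasi-)norm `‖f‖_{H^p} = ‖S(f)‖_{L^p[0,1]}`. -/
def HpNormS (p : ℝ) (s : Finset DyadicI) (a : DyadicI → ℝ) : ℝ :=
  (∫ t in Set.Icc (0 : ℝ) 1, sqFnS s a t ^ p) ^ (1 / p)

/-- The coefficients of the scalar rearrangement operator `T_{τ,p}` applied to
`f = ∑_{I ∈ s} a_I h_I`; `T_{τ,p}` is determined by
`T_{τ,p}(h_I/|I|^{1/p}) = h_{τ(I)}/|τ(I)|^{1/p}`. -/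
def rearrCoefS (τ : DyadicI → DyadicI) (p : ℝ) (s : Finset DyadicI) (a : DyadicI → ℝ) :
    DyadicI → ℝ :=
  fun J => ∑ I ∈ s, if τ I = J then ((len I / len (τ I)) ^ (1 / p)) * a I else 0

/-- The operator norm `‖T_{τ,p} ⊗ Id_X : H^p_X → H^p_X‖ ∈ [0,∞]`, computed as the
supremum over finitely supported `f` in the unit ball of `H^p_X`. -/
def hpOpNorm (τ : DyadicI → DyadicI) (p : ℝ) (X : Type*) [NormedAddCommGroup X]
    [NormedSpace ℝ X] : ℝ≥0∞ :=
  ⨆ (s : Finset DyadicI) (x : DyadicI → X) (_ : HpNormV p s x ≤ 1),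
    ENNReal.ofReal (HpNormV p (s.image τ) (rearrCoef τ p s x))

/-- The scalar operator norm `‖T_{τ,p} : H^p → H^p‖ ∈ [0,∞]`. -/
def hpOpNormS (τ : DyadicI → DyadicI) (p : ℝ) : ℝ≥0∞ :=
  ⨆ (s : Finset DyadicI) (a : DyadicI → ℝ) (_ : HpNormS p s a ≤ 1),
    ENNReal.ofReal (HpNormS p (s.image τ) (rearrCoefS τ p s a))

/-- For `H = τ(L)` (so that `σ(J) = I` for `J = τ(I)`, `I ∈ L`), the maximal function
`μ_H(t) = sup_{J ∈ H} (|σ(J)|/|J|) 1_J(t) = sup_{I ∈ L} (|I|/|τ(I)|) 1_{τ(I)}(t)`,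
as an `[0,∞]`-valued function. -/
def muSet (τ : DyadicI → DyadicI) (L : Set DyadicI) (t : ℝ) : ℝ≥0∞ :=
  ⨆ (I : DyadicI) (_ : I ∈ L),
    ENNReal.ofReal (len I / len (τ I) * Set.indicator (toSet (τ I)) (fun _ => (1 : ℝ)) t)

/-- For `H = τ(L)` with `L` finite, the (real-valued) maximal function
`μ_H(t) = max_{I ∈ L} (|I|/|τ(I)|) 1_{τ(I)}(t)`. -/
def muFin (τ : DyadicI → DyadicI) (L : Finset DyadicI) (t : ℝ) : ℝ :=
  ((L.sup fun I =>
    Real.toNNReal (len I / len (τ I) * Set.indicator (toSet (τ I)) (fun _ => (1 : ℝ)) t) : ℝ≥0) : ℝ)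

/-- The point set `L* = ⋃_{I ∈ L} I` covered by a collection of dyadic intervals. -/
def pointSet (L : Set DyadicI) : Set ℝ := ⋃ I ∈ L, toSet I

/-- The constant `C₁ = sup_{H ⊆ τ(D), H ≠ ∅} (1/|σ(H)*|) ∫₀¹ μ_H(t) dt`, where
nonempty collections `H ⊆ τ(D)` are parametrized as `H = τ(L)` for nonempty `L ⊆ D`,
so that `σ(H)* = L*`. -/
def Cone (τ : DyadicI → DyadicI) : ℝ≥0∞ :=
  ⨆ (L : Set DyadicI) (_ : L.Nonempty),
    (∫⁻ t in Set.Icc (0 : ℝ) 1, muSet τ L t) / volume (pointSet L)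

/-- The square of the dyadic BMO norm of `g = ∑_{J ∈ s} a_J h_J`:
`‖g‖_{BMO}² = sup_{I ∈ D} (1/|I|) ∑_{J ⊆ I} a_J² |J|`. -/
def bmoSq (s : Finset DyadicI) (a : DyadicI → ℝ) : ℝ≥0∞ :=
  ⨆ I : DyadicI, ENNReal.ofReal
    ((∑ J ∈ s.filter fun J => toSet J ⊆ toSet I, a J ^ 2 * len J) / len I)

/-- The coefficients of `S_σ(g)` for `g = ∑_{J ∈ s} a_J h_J`, where `σ = τ⁻¹` on `τ(D)`:
`S_σ(h_J) = h_{σ(J)}` for `J ∈ τ(D)` and `S_σ(h_J) = 0` otherwise, so that the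
coefficient of `h_K` in `S_σ(g)` is `a_{τ(K)}` if `τ(K) ∈ s`, and `0` otherwise. -/
def sSigmaCoef (τ : DyadicI → DyadicI) (s : Finset DyadicI) (a : DyadicI → ℝ) :
    DyadicI → ℝ :=
  fun K => if τ K ∈ s then a (τ K) else 0

/-- The Haar support of `S_σ(g)` for `g` with Haar support `s`:
`σ(s ∩ τ(D))`, i.e. the preimage under `τ` of `s`. -/
def sSigmaSupp (τ : DyadicI → DyadicI) (s : Finset DyadicI) : Finset DyadicI :=
  (s.filter fun J => J ∈ Set.range τ).image (Function.invFun τ)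

/-- The operator norm `‖S_σ‖_{BMO} ∈ [0,∞]` of `S_σ` with respect to the dyadic BMO
norm, computed over finitely supported Haar expansions. -/
def bmoOpNorm (τ : DyadicI → DyadicI) : ℝ≥0∞ :=
  ⨆ (s : Finset DyadicI) (a : DyadicI → ℝ) (_ : bmoSq s a ≤ 1),
    (bmoSq (sSigmaSupp τ s) (sSigmaCoef τ s a)) ^ (1 / 2 : ℝ)

/-- The Carleson constant `⟦C⟧ = sup_{I ∈ C} (1/|I|) ∑_{J ∈ C, J ⊆ I} |J| ∈ [0,∞]`
of a collection of dyadic intervals. -/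
def carleson (C : Set DyadicI) : ℝ≥0∞ :=
  ⨆ (I : DyadicI) (_ : I ∈ C),
    (∑' J : {J : DyadicI // J ∈ C ∧ toSet J ⊆ toSet I}, ENNReal.ofReal (len J.1)) /
      ENNReal.ofReal (len I)

/-- The `L^p_X = L^p([0,1]; X)` (Bochner) norm of `f = ∑_{I ∈ s} x_I h_I`. -/
def LpNormV (p : ℝ) (s : Finset DyadicI) (x : DyadicI → X) : ℝ :=
  (∫ t in Set.Icc (0 : ℝ) 1, ‖∑ I ∈ s, haar I t • x I‖ ^ p) ^ (1 / p)

/-- The operator norm `‖T_{τ,p} ⊗ Id_X : L^p_X → L^p_X‖ ∈ [0,∞]`, computed over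
finitely supported Haar expansions. -/
def lpOpNorm (τ : DyadicI → DyadicI) (p : ℝ) (X : Type*) [NormedAddCommGroup X]
    [NormedSpace ℝ X] : ℝ≥0∞ :=
  ⨆ (s : Finset DyadicI) (x : DyadicI → X) (_ : LpNormV p s x ≤ 1),
    ENNReal.ofReal (LpNormV p (s.image τ) (rearrCoef τ p s x))

/-- The operator norm `‖T_{τ,p}^{-1} ⊗ Id_X‖ ∈ [0,∞]` on the span of
`{h_J : J ∈ τ(D)}` with the `L^p_X` norm: the map determined by
`x h_{τ(I)}/|τ(I)|^{1/p} ↦ x h_I/|I|^{1/p}`, i.e. sending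
`g = ∑_{I ∈ L} x_I h_{τ(I)}` to `∑_{I ∈ L} (|τ(I)|/|I|)^{1/p} x_I h_I`. -/
def lpInvOpNorm (τ : DyadicI → DyadicI) (p : ℝ) (X : Type*) [NormedAddCommGroup X]
    [NormedSpace ℝ X] : ℝ≥0∞ :=
  ⨆ (L : Finset DyadicI) (x : DyadicI → X)
    (_ : LpNormV p (L.image τ) (fun J => ∑ I ∈ L, if τ I = J then x I else 0) ≤ 1),
    ENNReal.ofReal (LpNormV p L fun I => ((len (τ I) / len I) ^ (1 / p)) • x I)

/-- The operator norm `‖T_{τ,1}^{-1}‖₁ ∈ [0,∞]` on the span of `{h_J : J ∈ τ(D)}`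
with the dyadic `H¹` norm: the map determined by `h_{τ(I)}/|τ(I)| ↦ h_I/|I|`,
i.e. sending `g = ∑_{I ∈ L} a_I h_{τ(I)}` to `∑_{I ∈ L} (|τ(I)|/|I|) a_I h_I`. -/
def h1InvOpNorm (τ : DyadicI → DyadicI) : ℝ≥0∞ :=
  ⨆ (L : Finset DyadicI) (a : DyadicI → ℝ)
    (_ : HpNormS 1 (L.image τ) (fun J => ∑ I ∈ L, if τ I = J then a I else 0) ≤ 1),
    ENNReal.ofReal (HpNormS 1 L fun I => (len (τ I) / len I) * a I)

/-- The Rademacher average `(E_ε ‖∑_{i<n} ε_i a_i‖^p)^{1/p}` over all choices of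
signs `ε_i ∈ {±1}`. -/
def radAvg (p : ℝ) {Y : Type*} [NormedAddCommGroup Y] [NormedSpace ℝ Y] (n : ℕ)
    (a : Fin n → Y) : ℝ :=
  ((∑ ε : Fin n → Bool, ‖∑ i, (if ε i then (1 : ℝ) else -1) • a i‖ ^ p) / 2 ^ n) ^ (1 / p)

/-- The type-`p` constant `Type_p(Y) ∈ [0,∞]`: the least `C` such that
`(E_ε ‖∑ ε_i a_i‖^p)^{1/p} ≤ C (∑ ‖a_i‖^p)^{1/p}` for all finite families in `Y`. -/
def typeConst (p : ℝ) (Y : Type*) [NormedAddCommGroup Y] [NormedSpace ℝ Y] : ℝ≥0∞ :=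
  sInf {C : ℝ≥0∞ | ∀ (n : ℕ) (a : Fin n → Y),
    ENNReal.ofReal (radAvg p n a) ≤ C * ENNReal.ofReal ((∑ i, ‖a i‖ ^ p) ^ (1 / p))}

/-- The UMD property of a Banach space `E`: for each `1 < r < ∞` the Haar system is
unconditional in `L^r_E`. -/
def IsUMD (E : Type*) [NormedAddCommGroup E] [NormedSpace ℝ E] : Prop :=
  ∀ r : ℝ, 1 < r → ∃ β : ℝ, ∀ (s : Finset DyadicI) (x : DyadicI → E) (ε : DyadicI → ℝ),
    (∀ I, ε I = 1 ∨ ε I = -1) →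
    LpNormV r s (fun I => ε I • x I) ≤ β * LpNormV r s x

/-- `B` is a block in `L` with top `I`: `B ⊆ L`, `I` is the unique maximal interval
of `B`, and `B` is order-convex in `L` between its elements and `I`. -/
def IsBlock (L : Set DyadicI) (B : Set DyadicI) (I : DyadicI) : Prop :=
  B ⊆ L ∧ I ∈ B ∧ (∀ J ∈ B, toSet J ⊆ toSet I) ∧
    ∀ J ∈ B, ∀ K ∈ L, toSet J ⊆ toSet K → toSet K ⊆ toSet I → K ∈ B

/-- `G₁(K | E)`: the maximal dyadic intervals of `E` strictly contained in `K`. -/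
def gen1 (K : DyadicI) (E : Set DyadicI) : Set DyadicI :=
  {J | J ∈ E ∧ toSet J ⊂ toSet K ∧
    ∀ J' ∈ E, toSet J' ⊂ toSet K → toSet J ⊆ toSet J' → J' = J}

end Defs

/-!
A single test space suffices: `E = ℓ^q(D)` with `1 < q < p`.

It has the UMD property. In a Hilbert space the Haar functions are orthogonal, so the unconditional
constant at exponent `2` is `1`; a good-`λ` inequality moves unconditionality from one exponent
to any other in `(1, ∞)`; Fubini gives `ℓ^q`-valued unconditionality at exponent `q`, and a second
extrapolation reaches all exponents.

Giving distinct Haar functions disjointly supported coefficients in `ℓ^q(D)` turns the bound for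
`T_{τ,p} ⊗ Id` into a scalar inequality in `L^r`, `r = p / q > 1`, between positive combinations of
the characteristic functions `1_I` and `1_{τ(I)}`. Together with the dual Carleson embedding
`‖∑ b_I g_I 1_I‖_r^r ≤ r^r ∑ g_I^r b_I |I|` and Jensen's inequality, it shows that if the weights
`b_I` satisfy a Carleson packing condition on the intervals `I`, then they satisfy one on the
intervals `τ(I)`. Since such conditions on the squared Haar coefficients describe dyadic `BMO`, the
bound on `H¹` follows by duality: the norm of `f` in `H¹` is attained by pairing with an explicit
element of `BMO`, and Fefferman's inequality bounds the transported pairing.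
-/

/-! ### Dyadic intervals -/

namespace DyadicI

lemma len_eq_inv (I : DyadicI) : len I = ((2 : ℝ) ^ I.n)⁻¹ := by
  rw [len, zpow_neg, zpow_natCast]

lemma len_pos (I : DyadicI) : 0 < len I := by
  rw [len_eq_inv]; positivity

lemma mem_toSet_iff_floor {I : DyadicI} {t : ℝ} : t ∈ toSet I ↔ ⌊2 ^ I.n * t⌋ = (I.k : ℤ) := by
  have hp : (0 : ℝ) < 2 ^ I.n := by positivity
  rw [toSet, lep, len_eq_inv, mem_Ico, ← add_one_mul, ← div_eq_mul_inv, ← div_eq_mul_inv,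
    div_le_iff₀' hp, lt_div_iff₀' hp, Int.floor_eq_iff, Int.cast_natCast]

lemma haar_eq_ite_floor (I : DyadicI) (t : ℝ) :
    haar I t = if ⌊2 ^ (I.n + 1) * t⌋ = 2 * I.k then 1
      else if ⌊2 ^ (I.n + 1) * t⌋ = 2 * I.k + 1 then -1 else 0 := by
  have hp : (0 : ℝ) < 2 ^ (I.n + 1) := by positivity
  have hlen : len I = 2 / 2 ^ (I.n + 1) := by rw [len_eq_inv, pow_succ]; field_simp
  have hleft : t ∈ Ico (lep I) (lep I + len I / 2) ↔ ⌊2 ^ (I.n + 1) * t⌋ = 2 * I.k := by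
    have hl : lep I = (2 * I.k : ℝ) / 2 ^ (I.n + 1) := by rw [lep, hlen]; ring
    have hr : lep I + len I / 2 = (2 * I.k + 1 : ℝ) / 2 ^ (I.n + 1) := by rw [lep, hlen]; ring
    rw [mem_Ico, hr, hl, div_le_iff₀' hp, lt_div_iff₀' hp, Int.floor_eq_iff]
    push_cast
    rfl
  have hright : t ∈ Ico (lep I + len I / 2) (lep I + len I) ↔
      ⌊2 ^ (I.n + 1) * t⌋ = 2 * I.k + 1 := by
    have hl : lep I + len I / 2 = (2 * I.k + 1 : ℝ) / 2 ^ (I.n + 1) := by rw [lep, hlen]; ring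
    have hr : lep I + len I = (2 * I.k + 1 + 1 : ℝ) / 2 ^ (I.n + 1) := by rw [lep, hlen]; ring
    rw [mem_Ico, hl, hr, div_le_iff₀' hp, lt_div_iff₀' hp, Int.floor_eq_iff]
    push_cast
    rfl
  simp only [haar, hleft, hright]

lemma floor_two_pow_mul {n N : ℕ} (h : n ≤ N) (t : ℝ) :
    ⌊2 ^ n * t⌋ = ⌊2 ^ N * t⌋ / 2 ^ (N - n) := by
  have hdiv : (2 : ℝ) ^ n * t = 2 ^ N * t / (2 ^ (N - n) : ℕ) := by
    rw [← Nat.sub_add_cancel h, pow_add, Nat.add_sub_cancel]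
    push_cast
    field_simp
  rw [hdiv, Int.floor_div_natCast]
  push_cast
  rfl

lemma floor_eq_of_floor_eq {n N : ℕ} (h : n ≤ N) {t u : ℝ} (htu : ⌊2 ^ N * t⌋ = ⌊2 ^ N * u⌋) :
    ⌊2 ^ n * t⌋ = ⌊2 ^ n * u⌋ := by
  rw [floor_two_pow_mul h, htu, ← floor_two_pow_mul h]

/-- The characteristic function `1_I` of the dyadic interval `I`. -/
def ind (I : DyadicI) (t : ℝ) : ℝ := (toSet I).indicator (fun _ => (1 : ℝ)) t

lemma ind_of_mem {I : DyadicI} {t : ℝ} (h : t ∈ toSet I) : ind I t = 1 := indicator_of_mem h _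

lemma ind_of_notMem {I : DyadicI} {t : ℝ} (h : t ∉ toSet I) : ind I t = 0 :=
  indicator_of_notMem h _

lemma ind_nonneg (I : DyadicI) (t : ℝ) : 0 ≤ ind I t :=
  indicator_nonneg (fun _ _ => zero_le_one) t

lemma abs_haar (I : DyadicI) (t : ℝ) : |haar I t| = ind I t := by
  have hlen := len_pos I
  rw [ind, indicator_apply, haar, toSet]
  simp only [mem_Ico]
  split_ifs <;> simp <;> grind

lemma lep_mem_toSet (I : DyadicI) : lep I ∈ toSet I := by
  simp [toSet, len_pos I]

lemma toSet_subset_of_mem {J K : DyadicI} {t : ℝ} (hJ : t ∈ toSet J) (hK : t ∈ toSet K)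
    (h : K.n ≤ J.n) : toSet J ⊆ toSet K := fun u hu => by
  rw [mem_toSet_iff_floor] at *
  rw [← hK, floor_eq_of_floor_eq h (hu.trans hJ.symm)]

lemma level_le_of_subset {J K : DyadicI} (h : toSet J ⊆ toSet K) : K.n ≤ J.n := by
  rw [toSet, toSet, Ico_subset_Ico_iff (by linarith [len_pos J])] at h
  have hlen : len J ≤ len K := by linarith [h.1, h.2]
  rw [len_eq_inv, len_eq_inv, inv_le_inv₀ (by positivity) (by positivity)] at hlen
  exact (pow_le_pow_iff_right₀ one_lt_two).1 hlen

lemma eq_of_mem_of_level_eq {J K : DyadicI} {t : ℝ} (hJ : t ∈ toSet J) (hK : t ∈ toSet K)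
    (h : J.n = K.n) : J = K := by
  rw [mem_toSet_iff_floor] at *
  obtain ⟨n, j, hj⟩ := J
  obtain ⟨m, k, hk⟩ := K
  obtain rfl : n = m := h
  obtain rfl : j = k := by exact_mod_cast hJ.symm.trans hK
  rfl

lemma toSet_subset_Icc (I : DyadicI) : toSet I ⊆ Icc 0 1 := fun t ht => by
  have hp : (0 : ℝ) < 2 ^ I.n := by positivity
  rw [mem_toSet_iff_floor, Int.floor_eq_iff] at ht
  have hk : (I.k : ℝ) + 1 ≤ 2 ^ I.n := by exact_mod_cast I.hk
  push_cast at ht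
  constructor <;> nlinarith [Nat.cast_nonneg (α := ℝ) I.k]

lemma exists_forall_level_lt (s : Finset DyadicI) : ∃ N, ∀ I ∈ s, I.n < N :=
  ⟨s.sup DyadicI.n + 1, fun _ hI => Nat.lt_succ_of_le (Finset.le_sup (f := DyadicI.n) hI)⟩

end DyadicI

/-! ### Dyadic step functions -/

/-- `F` is a dyadic step function of level `N`: it is constant on each interval
`[m/2^N, (m+1)/2^N)`, `m ∈ ℤ`. -/
def IsDyadicStep {α : Type*} (N : ℕ) (F : ℝ → α) : Prop :=
  ∀ ⦃t u : ℝ⦄, ⌊2 ^ N * t⌋ = ⌊2 ^ N * u⌋ → F t = F u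

namespace IsDyadicStep

variable {α β γ : Type*} {N M : ℕ}

lemma mono {F : ℝ → α} (hF : IsDyadicStep N F) (h : N ≤ M) : IsDyadicStep M F :=
  fun _ _ htu => hF (floor_eq_of_floor_eq h htu)

lemma comp {F : ℝ → α} (hF : IsDyadicStep N F) (φ : α → β) : IsDyadicStep N fun t => φ (F t) :=
  fun _ _ htu => congrArg φ (hF htu)

lemma comp₂ {F : ℝ → α} {G : ℝ → β} (hF : IsDyadicStep N F) (hG : IsDyadicStep N G)
    (φ : α → β → γ) : IsDyadicStep N fun t => φ (F t) (G t) :=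
  fun _ _ htu => congrArg₂ φ (hF htu) (hG htu)

lemma sum {ι E : Type*} [AddCommMonoid E] {s : Finset ι} {F : ι → ℝ → E}
    (hF : ∀ i ∈ s, IsDyadicStep N (F i)) : IsDyadicStep N fun t => ∑ i ∈ s, F i t :=
  fun _ _ htu => Finset.sum_congr rfl fun i hi => hF i hi htu

end IsDyadicStep

namespace DyadicI

lemma isDyadicStep_mem (I : DyadicI) : IsDyadicStep I.n fun t => t ∈ toSet I := fun t u htu => by
  simp only [mem_toSet_iff_floor, htu]

lemma isDyadicStep_ind (I : DyadicI) : IsDyadicStep I.n (ind I) := fun t u htu => by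
  simp only [ind, indicator_apply, isDyadicStep_mem I htu]

lemma isDyadicStep_haar (I : DyadicI) : IsDyadicStep (I.n + 1) (haar I) := fun t u htu => by
  simp only [haar_eq_ite_floor, htu]

end DyadicI

/-- The average of `F` over the left endpoints of the dyadic intervals of level `N`; for a step
function of level `N` this is its integral over `[0, 1]`. -/
def gridAvg (N : ℕ) (F : ℝ → ℝ) : ℝ := (∑ m ∈ Finset.range (2 ^ N), F (m / 2 ^ N)) / 2 ^ N

lemma two_pow_mul_natCast_div (N m : ℕ) : (2 : ℝ) ^ N * (m / 2 ^ N) = m :=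
  mul_div_cancel₀ _ (by positivity)

lemma IsDyadicStep.eqOn_Ioo {α : Type*} {N : ℕ} {F : ℝ → α} (hF : IsDyadicStep N F) (m : ℕ) :
    EqOn F (fun _ => F (m / 2 ^ N)) (Ioo (m / 2 ^ N) ((m + 1 : ℕ) / 2 ^ N)) := fun t ht => by
  have hp : (0 : ℝ) < 2 ^ N := by positivity
  refine hF ?_
  rw [two_pow_mul_natCast_div, Int.floor_natCast, Int.floor_eq_iff]
  rw [mem_Ioo, div_lt_iff₀' hp, lt_div_iff₀' hp] at ht
  push_cast at ht ⊢
  exact ⟨ht.1.le, ht.2⟩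

section StepIntegral

variable {N : ℕ} {F : ℝ → ℝ}

lemma natCast_div_two_pow_le_succ (N m : ℕ) : (m : ℝ) / 2 ^ N ≤ (m + 1 : ℕ) / 2 ^ N := by
  gcongr; simp

lemma IsDyadicStep.intervalIntegrable_piece (hF : IsDyadicStep N F) (m : ℕ) :
    IntervalIntegrable F volume (m / 2 ^ N) ((m + 1 : ℕ) / 2 ^ N) := by
  refine (intervalIntegrable_const (c := F (m / 2 ^ N))).congr_uIoo ?_
  rw [uIoo_of_le (natCast_div_two_pow_le_succ N m)]
  exact (hF.eqOn_Ioo m).symm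

lemma IsDyadicStep.integrableOn (hF : IsDyadicStep N F) : IntegrableOn F (Icc 0 1) := by
  have hiter := IntervalIntegrable.trans_iterate (a := fun m : ℕ => (m : ℝ) / 2 ^ N)
    (n := 2 ^ N) fun m _ => hF.intervalIntegrable_piece m
  rw [integrableOn_Icc_iff_integrableOn_Ioc, ← intervalIntegrable_iff_integrableOn_Ioc_of_le
    zero_le_one]
  simpa using hiter

lemma IsDyadicStep.integral_eq_gridAvg (hF : IsDyadicStep N F) :
    ∫ t in Icc (0 : ℝ) 1, F t = gridAvg N F := by
  have hpiece (m : ℕ) : ∫ t in (m / 2 ^ N : ℝ)..((m + 1 : ℕ) / 2 ^ N), F t =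
      F (m / 2 ^ N) / 2 ^ N := by
    rw [intervalIntegral.integral_congr_Ioo_of_le (natCast_div_two_pow_le_succ N m)
      (hF.eqOn_Ioo m), intervalIntegral.integral_const, smul_eq_mul]
    push_cast
    ring
  have hsum := intervalIntegral.sum_integral_adjacent_intervals
    (a := fun m : ℕ => (m : ℝ) / 2 ^ N) (n := 2 ^ N) fun m _ => hF.intervalIntegrable_piece m
  rw [integral_Icc_eq_integral_Ioc, ← intervalIntegral.integral_of_le zero_le_one, gridAvg,
    Finset.sum_div, ← Finset.sum_congr rfl fun m _ => hpiece m, hsum]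
  simp

lemma IsDyadicStep.gridAvg_eq {M : ℕ} (hF : IsDyadicStep N F) (h : N ≤ M) :
    gridAvg M F = gridAvg N F := by
  rw [← hF.integral_eq_gridAvg, (hF.mono h).integral_eq_gridAvg]

end StepIntegral

section GridAvg

variable {N : ℕ} {F G : ℝ → ℝ}

lemma gridAvg_mono (h : ∀ t, F t ≤ G t) : gridAvg N F ≤ gridAvg N G :=
  div_le_div_of_nonneg_right (Finset.sum_le_sum fun _ _ => h _) (by positivity)

lemma gridAvg_nonneg (h : ∀ t, 0 ≤ F t) : 0 ≤ gridAvg N F :=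
  div_nonneg (Finset.sum_nonneg fun _ _ => h _) (by positivity)

lemma gridAvg_add (N : ℕ) (F G : ℝ → ℝ) :
    gridAvg N (fun t => F t + G t) = gridAvg N F + gridAvg N G := by
  rw [gridAvg, Finset.sum_add_distrib, add_div, gridAvg, gridAvg]

lemma gridAvg_const_mul (N : ℕ) (c : ℝ) (F : ℝ → ℝ) :
    gridAvg N (fun t => c * F t) = c * gridAvg N F := by
  rw [gridAvg, ← Finset.mul_sum, mul_div_assoc, gridAvg]

end GridAvg

/-! ### Swapping the two halves of a dyadic interval -/

/-- The involution of `ℝ` that interchanges the two halves of every dyadic interval of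
level `k`. -/
def halfSwap (k : ℕ) (t : ℝ) : ℝ :=
  if Even ⌊2 ^ (k + 1) * t⌋ then t + (2 ^ (k + 1))⁻¹ else t - (2 ^ (k + 1))⁻¹

lemma floor_halfSwap (k : ℕ) (t : ℝ) :
    ⌊2 ^ (k + 1) * halfSwap k t⌋ =
      if Even ⌊2 ^ (k + 1) * t⌋ then ⌊2 ^ (k + 1) * t⌋ + 1 else ⌊2 ^ (k + 1) * t⌋ - 1 := by
  have hp : (2 : ℝ) ^ (k + 1) ≠ 0 := by positivity
  rw [halfSwap]
  split_ifs
  · rw [mul_add, mul_inv_cancel₀ hp, Int.floor_add_one]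
  · rw [mul_sub, mul_inv_cancel₀ hp, Int.floor_sub_one]

lemma IsDyadicStep.comp_halfSwap {α : Type*} {k : ℕ} {F : ℝ → α} (hF : IsDyadicStep k F) (t : ℝ) :
    F (halfSwap k t) = F t := by
  refine hF ?_
  rw [floor_two_pow_mul k.le_succ, floor_two_pow_mul (t := t) k.le_succ, Nat.succ_eq_add_one,
    floor_halfSwap, Nat.add_sub_cancel_left, pow_one]
  simp only [Int.even_iff]
  split_ifs <;> omega

lemma haar_halfSwap {k : ℕ} {I : DyadicI} (h : I.n = k) (t : ℝ) :
    haar I (halfSwap k t) = -haar I t := by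
  subst h
  simp only [haar_eq_ite_floor, floor_halfSwap, Int.even_iff]
  split_ifs <;> first | omega | norm_num

lemma halfSwap_natCast_div (k m : ℕ) :
    halfSwap k (m / 2 ^ (k + 1)) = ((if Even m then m + 1 else m - 1 : ℕ) : ℝ) / 2 ^ (k + 1) := by
  simp only [halfSwap, two_pow_mul_natCast_div, Int.floor_natCast, Int.even_coe_nat]
  split_ifs with hm
  · push_cast; ring
  · rw [Nat.cast_pred (Nat.not_even_iff_odd.1 hm).pos]; ring

lemma gridAvg_comp_halfSwap {k N : ℕ} {F : ℝ → ℝ} (hF : IsDyadicStep (k + 1) F) (hk : k < N) :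
    gridAvg N (fun t => F (halfSwap k t)) = gridAvg N F := by
  have hswap : IsDyadicStep (k + 1) fun t => F (halfSwap k t) := fun t u htu => hF <| by
    rw [floor_halfSwap, floor_halfSwap, htu]
  rw [hswap.gridAvg_eq hk, hF.gridAvg_eq hk, gridAvg, gridAvg]
  congr 1
  refine Finset.sum_nbij' (fun m => if Even m then m + 1 else m - 1)
    (fun m => if Even m then m + 1 else m - 1) ?_ ?_ ?_ ?_
    fun m _ => congrArg F (halfSwap_natCast_div k m)
  all_goals
    intro m hm
    simp only [Finset.mem_range, pow_succ, Nat.even_iff] at hm ⊢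
    split_ifs <;> omega

/-! ### Haar expansions as dyadic martingales -/

section HaarSum

variable {E : Type*} [NormedAddCommGroup E] [NormedSpace ℝ E]

/-- The Haar expansion `∑_{I ∈ s} x_I h_I`. -/
def haarSum (s : Finset DyadicI) (x : DyadicI → E) (t : ℝ) : E := ∑ I ∈ s, haar I t • x I

/-- The part of the Haar expansion coming from intervals of level less than `k`, that is, the
`k`-th term of the dyadic martingale with terminal value `haarSum s x`. -/
def haarPartial (s : Finset DyadicI) (x : DyadicI → E) (k : ℕ) (t : ℝ) : E :=
  haarSum {I ∈ s | I.n < k} x t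

/-- The part of the Haar expansion coming from intervals of level `k`, that is, the `k`-th
difference of the dyadic martingale. -/
def haarLevel (s : Finset DyadicI) (x : DyadicI → E) (k : ℕ) (t : ℝ) : E :=
  haarSum {I ∈ s | I.n = k} x t

variable {s : Finset DyadicI} {x y : DyadicI → E} {k N : ℕ} {t : ℝ}

lemma haarPartial_zero (s : Finset DyadicI) (x : DyadicI → E) (t : ℝ) :
    haarPartial s x 0 t = 0 := by
  simp [haarPartial, haarSum]

lemma haarPartial_succ (s : Finset DyadicI) (x : DyadicI → E) (k : ℕ) (t : ℝ) :
    haarPartial s x (k + 1) t = haarPartial s x k t + haarLevel s x k t := by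
  have hdisj : Disjoint ({I ∈ s | I.n < k}) ({I ∈ s | I.n = k}) :=
    Finset.disjoint_filter.2 fun _ _ hlt heq => hlt.ne heq
  rw [haarPartial, haarPartial, haarLevel, haarSum, haarSum, haarSum, ← Finset.sum_union hdisj,
    ← Finset.filter_or]
  simp only [Nat.lt_succ_iff_lt_or_eq]

lemma haarPartial_eq_haarSum (hN : ∀ I ∈ s, I.n < N) (x : DyadicI → E) (t : ℝ) :
    haarPartial s x N t = haarSum s x t := by
  rw [haarPartial, Finset.filter_true_of_mem hN]

lemma isDyadicStep_haarSum (hN : ∀ I ∈ s, I.n < N) (x : DyadicI → E) :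
    IsDyadicStep N (haarSum s x) :=
  IsDyadicStep.sum fun I hI => ((isDyadicStep_haar I).mono (hN I hI)).comp (· • x I)

lemma isDyadicStep_haarPartial (s : Finset DyadicI) (x : DyadicI → E) (k : ℕ) :
    IsDyadicStep k (haarPartial s x k) :=
  isDyadicStep_haarSum (fun _ hI => (Finset.mem_filter.1 hI).2) x

lemma haarLevel_halfSwap (s : Finset DyadicI) (x : DyadicI → E) (k : ℕ) (t : ℝ) :
    haarLevel s x k (halfSwap k t) = -haarLevel s x k t := by
  rw [haarLevel, haarLevel, haarSum, haarSum, ← Finset.sum_neg_distrib]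
  refine Finset.sum_congr rfl fun I hI => ?_
  rw [haar_halfSwap (Finset.mem_filter.1 hI).2, neg_smul]

lemma haarPartial_succ_halfSwap (s : Finset DyadicI) (x : DyadicI → E) (k : ℕ) (t : ℝ) :
    haarPartial s x (k + 1) (halfSwap k t) = haarPartial s x k t - haarLevel s x k t := by
  rw [haarPartial_succ, (isDyadicStep_haarPartial s x k).comp_halfSwap, haarLevel_halfSwap,
    sub_eq_add_neg]

lemma haar_eq_zero_of_notMem {I : DyadicI} (h : t ∉ toSet I) : haar I t = 0 := by
  rw [← abs_eq_zero, abs_haar, ind_of_notMem h]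

lemma norm_haarLevel (s : Finset DyadicI) (x : DyadicI → E) (k : ℕ) (t : ℝ) :
    ‖haarLevel s x k t‖ = ∑ I ∈ s with I.n = k, ind I t * ‖x I‖ := by
  rw [haarLevel, haarSum]
  by_cases h : ∃ I ∈ s, I.n = k ∧ t ∈ toSet I
  · obtain ⟨I, hIs, hIk, hIt⟩ := h
    have hother : ∀ J ∈ s.filter (·.n = k), J ≠ I → t ∉ toSet J := fun J hJ hne hJt =>
      hne (eq_of_mem_of_level_eq hJt hIt ((Finset.mem_filter.1 hJ).2.trans hIk.symm))
    have hmem : I ∈ s.filter (·.n = k) := Finset.mem_filter.2 ⟨hIs, hIk⟩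
    rw [Finset.sum_eq_single_of_mem I hmem fun J hJ hne => by
        rw [haar_eq_zero_of_notMem (hother J hJ hne), zero_smul],
      Finset.sum_eq_single_of_mem I hmem fun J hJ hne => by
        rw [ind_of_notMem (hother J hJ hne), zero_mul],
      norm_smul, Real.norm_eq_abs, abs_haar]
  · push Not at h
    rw [Finset.sum_eq_zero, Finset.sum_eq_zero, norm_zero]
    all_goals
      intro I hI
      rw [Finset.mem_filter] at hI
    · rw [ind_of_notMem (h I hI.1 hI.2), zero_mul]
    · rw [haar_eq_zero_of_notMem (h I hI.1 hI.2), zero_smul]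

lemma norm_haarLevel_congr (h : ∀ I, ‖x I‖ = ‖y I‖) (s : Finset DyadicI) (k : ℕ) (t : ℝ) :
    ‖haarLevel s x k t‖ = ‖haarLevel s y k t‖ := by
  simp only [norm_haarLevel, h]

lemma isDyadicStep_norm_haarLevel (s : Finset DyadicI) (x : DyadicI → E) (k : ℕ) :
    IsDyadicStep k fun t => ‖haarLevel s x k t‖ := by
  simp only [norm_haarLevel]
  refine IsDyadicStep.sum fun I hI => ?_
  obtain rfl := (Finset.mem_filter.1 hI).2
  exact (isDyadicStep_ind I).comp (· * ‖x I‖)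

lemma integral_norm_haarSum_rpow (hN : ∀ I ∈ s, I.n < N) (x : DyadicI → E) (q : ℝ) :
    ∫ t in Icc (0 : ℝ) 1, ‖haarSum s x t‖ ^ q = gridAvg N fun t => ‖haarSum s x t‖ ^ q :=
  ((isDyadicStep_haarSum hN x).comp (‖·‖ ^ q)).integral_eq_gridAvg

lemma integral_norm_haarSum_rpow_nonneg (s : Finset DyadicI) (x : DyadicI → E) (q : ℝ) :
    0 ≤ ∫ t in Icc (0 : ℝ) 1, ‖haarSum s x t‖ ^ q :=
  integral_nonneg fun _ => Real.rpow_nonneg (norm_nonneg _) q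

lemma haarSum_filter_of_isDyadicStep {W : ℕ → ℝ → Prop} (hW : ∀ k, IsDyadicStep k (W k))
    (hN : ∀ I ∈ s, I.n < N) (x : DyadicI → E) (t : ℝ) :
    haarSum {I ∈ s | W I.n (lep I)} x t = ∑ k ∈ Finset.range N with W k t, haarLevel s x k t := by
  have hlocal (I : DyadicI) : (if W I.n (lep I) then haar I t • x I else 0) =
      if W I.n t then haar I t • x I else 0 := by
    by_cases ht : t ∈ toSet I
    · have hfloor : ⌊2 ^ I.n * lep I⌋ = ⌊2 ^ I.n * t⌋ := by
        rw [mem_toSet_iff_floor.1 (lep_mem_toSet I), mem_toSet_iff_floor.1 ht]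
      simp only [hW I.n hfloor]
    · simp only [haar_eq_zero_of_notMem ht, zero_smul, ite_self]
  rw [haarSum, Finset.sum_filter, Finset.sum_filter,
    ← Finset.sum_fiberwise_of_maps_to fun I hI => Finset.mem_range.2 (hN I hI)]
  refine Finset.sum_congr rfl fun k _ => ?_
  have hterm : ∀ I ∈ s.filter (·.n = k), (if W I.n (lep I) then haar I t • x I else 0) =
      if W k t then haar I t • x I else 0 := fun I hI => by
    rw [hlocal, (Finset.mem_filter.1 hI).2]
  rw [Finset.sum_congr rfl hterm, haarLevel, haarSum]
  split_ifs
  · rfl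
  · exact Finset.sum_const_zero

end HaarSum

/-! ### Doob's maximal inequality -/

section Doob

variable {E : Type*} [NormedAddCommGroup E] [NormedSpace ℝ E]

lemma gridAvg_mul_norm_haarPartial_le (s : Finset DyadicI) (x : DyadicI → E) {k N : ℕ}
    (hk : k < N) {w : ℝ → ℝ} (hw : IsDyadicStep k w) (hw0 : ∀ t, 0 ≤ w t) :
    gridAvg N (fun t => w t * ‖haarPartial s x k t‖) ≤
      gridAvg N fun t => w t * ‖haarPartial s x (k + 1) t‖ := by
  have hstep : IsDyadicStep (k + 1) fun t => w t * ‖haarPartial s x (k + 1) t‖ :=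
    (hw.mono k.le_succ).comp₂ (isDyadicStep_haarPartial s x (k + 1)) fun a b => a * ‖b‖
  have hpoint (t : ℝ) : 2 * (w t * ‖haarPartial s x k t‖) ≤ w t * ‖haarPartial s x (k + 1) t‖ +
      w (halfSwap k t) * ‖haarPartial s x (k + 1) (halfSwap k t)‖ := by
    rw [hw.comp_halfSwap, haarPartial_succ_halfSwap, haarPartial_succ]
    have htri := norm_add_le (haarPartial s x k t + haarLevel s x k t)
      (haarPartial s x k t - haarLevel s x k t)
    rw [add_add_sub_cancel, ← two_smul ℝ (haarPartial s x k t), norm_smul, Real.norm_two] at htri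
    nlinarith [hw0 t]
  have havg := gridAvg_mono (N := N) hpoint
  rw [gridAvg_const_mul, gridAvg_add, gridAvg_comp_halfSwap hstep hk] at havg
  linarith

/-- The maximal function `max_{j ≤ k} ‖f_j‖` of the dyadic martingale `(f_j)` with terminal value
`haarSum s x`. -/
def haarMax (s : Finset DyadicI) (x : DyadicI → E) (k : ℕ) (t : ℝ) : ℝ :=
  partialSups (fun j => ‖haarPartial s x j t‖) k

lemma haarMax_zero (s : Finset DyadicI) (x : DyadicI → E) (t : ℝ) : haarMax s x 0 t = 0 := by
  rw [haarMax, partialSups_zero, haarPartial_zero, norm_zero]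

lemma haarMax_succ (s : Finset DyadicI) (x : DyadicI → E) (k : ℕ) (t : ℝ) :
    haarMax s x (k + 1) t = max (haarMax s x k t) ‖haarPartial s x (k + 1) t‖ :=
  partialSups_add_one _ _

lemma haarMax_le_iff {s : Finset DyadicI} {x : DyadicI → E} {k : ℕ} {t c : ℝ} :
    haarMax s x k t ≤ c ↔ ∀ j ≤ k, ‖haarPartial s x j t‖ ≤ c := partialSups_le_iff

lemma lt_haarMax_iff {s : Finset DyadicI} {x : DyadicI → E} {k : ℕ} {t c : ℝ} :
    c < haarMax s x k t ↔ ∃ j ≤ k, c < ‖haarPartial s x j t‖ := by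
  simpa only [not_le, not_forall, exists_prop] using haarMax_le_iff.not

lemma norm_haarPartial_le_haarMax (s : Finset DyadicI) (x : DyadicI → E) (k : ℕ) (t : ℝ) :
    ‖haarPartial s x k t‖ ≤ haarMax s x k t :=
  le_partialSups (fun j => ‖haarPartial s x j t‖) k

lemma haarMax_nonneg (s : Finset DyadicI) (x : DyadicI → E) (k : ℕ) (t : ℝ) :
    0 ≤ haarMax s x k t :=
  (norm_nonneg _).trans (norm_haarPartial_le_haarMax s x k t)

lemma isDyadicStep_haarMax (s : Finset DyadicI) (x : DyadicI → E) (k : ℕ) :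
    IsDyadicStep k (haarMax s x k) := fun t u htu =>
  eq_of_forall_ge_iff fun c => by
    simp only [haarMax_le_iff]
    exact forall₂_congr fun j hj => by
      rw [(isDyadicStep_haarPartial s x j).mono hj htu]

lemma mul_rpow_sub_one_le {r a b : ℝ} (hr : 1 < r) (ha : 0 ≤ a) (hb : 0 ≤ b) :
    a * b ^ (r - 1) ≤ a ^ r / r + (1 - 1 / r) * b ^ r := by
  have hconj : r.HolderConjugate (r / (r - 1)) := Real.HolderConjugate.conjExponent hr
  have hyoung := Real.young_inequality_of_nonneg ha (Real.rpow_nonneg hb (r - 1)) hconj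
  have hr1 : r - 1 ≠ 0 := by linarith
  rw [← Real.rpow_mul hb, mul_div_cancel₀ r hr1] at hyoung
  refine hyoung.trans_eq ?_
  field_simp

lemma max_rpow_sub_rpow_le {r a b : ℝ} (hr : 1 < r) (ha : 0 ≤ a) (hb : 0 ≤ b) :
    max a b ^ r - a ^ r ≤ r / (r - 1) * (b * (max a b ^ (r - 1) - a ^ (r - 1))) := by
  rcases le_total b a with h | h
  · simp [max_eq_left h]
  have hyoung := mul_rpow_sub_one_le hr hb ha
  have hbr : b * b ^ (r - 1) = b ^ r := by
    rw [← Real.rpow_one_add' hb (by linarith), add_sub_cancel]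
  rw [max_eq_right h, mul_sub, hbr, div_mul_eq_mul_div, le_div_iff₀ (by linarith)]
  have hscaled : r * (b * a ^ (r - 1)) ≤ b ^ r + (r - 1) * a ^ r :=
    (mul_le_mul_of_nonneg_left hyoung (by linarith)).trans_eq (by field_simp)
  linarith

lemma gridAvg_haarMax_rpow_le_mul (s : Finset DyadicI) (x : DyadicI → E) {r : ℝ} (hr : 1 < r)
    {k N : ℕ} (hk : k ≤ N) :
    gridAvg N (fun t => haarMax s x k t ^ r) ≤
      r / (r - 1) * gridAvg N fun t => haarMax s x k t ^ (r - 1) * ‖haarPartial s x k t‖ := by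
  induction k with
  | zero => simp [haarMax_zero, haarPartial_zero, gridAvg, Real.zero_rpow (by linarith : r ≠ 0)]
  | succ k ih =>
    have hsub := gridAvg_mul_norm_haarPartial_le s x hk
      ((isDyadicStep_haarMax s x k).comp (· ^ (r - 1)))
      fun t => Real.rpow_nonneg (haarMax_nonneg s x k t) _
    have hpoint (t : ℝ) : haarMax s x (k + 1) t ^ r +
        r / (r - 1) * (haarMax s x k t ^ (r - 1) * ‖haarPartial s x (k + 1) t‖) ≤
        haarMax s x k t ^ r +
        r / (r - 1) * (haarMax s x (k + 1) t ^ (r - 1) * ‖haarPartial s x (k + 1) t‖) := by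
      have hmax := max_rpow_sub_rpow_le hr (haarMax_nonneg s x k t)
        (norm_nonneg (haarPartial s x (k + 1) t))
      rw [haarMax_succ]
      linarith
    have havg := gridAvg_mono (N := N) hpoint
    rw [gridAvg_add, gridAvg_add, gridAvg_const_mul, gridAvg_const_mul] at havg
    have hc : 0 ≤ r / (r - 1) := div_nonneg (by linarith) (by linarith)
    linarith [ih (Nat.le_of_succ_le hk), mul_le_mul_of_nonneg_left hsub hc]

theorem gridAvg_haarMax_rpow_le (s : Finset DyadicI) (x : DyadicI → E) {r : ℝ} (hr : 1 < r)
    (N : ℕ) :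
    gridAvg N (fun t => haarMax s x N t ^ r) ≤
      (r / (r - 1)) ^ r * gridAvg N fun t => ‖haarPartial s x N t‖ ^ r := by
  have hr0 : 0 < r := by linarith
  have hc : 0 ≤ r / (r - 1) := div_nonneg hr0.le (by linarith)
  have hyoung (t : ℝ) : r / (r - 1) * (haarMax s x N t ^ (r - 1) * ‖haarPartial s x N t‖) ≤
      (r / (r - 1)) ^ r / r * ‖haarPartial s x N t‖ ^ r + (1 - 1 / r) * haarMax s x N t ^ r := by
    have h := mul_rpow_sub_one_le hr (mul_nonneg hc (norm_nonneg (haarPartial s x N t)))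
      (haarMax_nonneg s x N t)
    rw [Real.mul_rpow hc (norm_nonneg _), mul_div_right_comm] at h
    exact h.trans_eq' (by ring)
  have havg := gridAvg_mono (N := N) hyoung
  rw [gridAvg_add, gridAvg_const_mul, gridAvg_const_mul, gridAvg_const_mul] at havg
  have hself := (gridAvg_haarMax_rpow_le_mul s x hr le_rfl).trans havg
  rw [sub_mul, one_mul, div_mul_eq_mul_div, one_div_mul_eq_div] at hself
  exact (div_le_div_iff_of_pos_right hr0).1 (by linarith)

end Doob

/-! ### Good-`λ` inequalities -/

section LayerCake

lemma integrableOn_indicator_Iio_rpow {r : ℝ} (hr : 0 < r) (a : ℝ) :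
    IntegrableOn ((Iio a).indicator fun l => r * l ^ (r - 1)) (Ioi 0) := by
  rw [IntegrableOn, integrable_indicator_iff measurableSet_Iio, IntegrableOn,
    Measure.restrict_restrict measurableSet_Iio, inter_comm, Ioi_inter_Iio]
  rcases le_total a 0 with ha | ha
  · simp [Ioo_eq_empty_of_le ha]
  · rw [← IntegrableOn, ← integrableOn_Ioc_iff_integrableOn_Ioo,
      ← intervalIntegrable_iff_integrableOn_Ioc_of_le ha]
    exact (intervalIntegral.intervalIntegrable_rpow' (by linarith)).const_mul r

lemma setIntegral_indicator_Iio_rpow {r a : ℝ} (hr : 0 < r) (ha : 0 ≤ a) :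
    ∫ l in Ioi 0, (Iio a).indicator (fun l => r * l ^ (r - 1)) l = a ^ r := by
  rw [setIntegral_indicator measurableSet_Iio, Ioi_inter_Iio, ← integral_Ioc_eq_integral_Ioo,
    ← intervalIntegral.integral_of_le ha, intervalIntegral.integral_const_mul,
    integral_rpow (Or.inl (by linarith)), sub_add_cancel, Real.zero_rpow hr.ne', sub_zero,
    mul_div_cancel₀ _ hr.ne']

lemma gridAvg_rpow_le_of_good_lambda {N : ℕ} {f g : ℝ → ℝ} (hf : ∀ t, 0 ≤ f t)
    (hg : ∀ t, 0 ≤ g t) {r ε : ℝ} (hr : 0 < r)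
    (h : ∀ l > 0, gridAvg N (fun t => if 2 * l < f t then 1 else 0) ≤
      ε * gridAvg N (fun t => if l < f t then 1 else 0) +
        gridAvg N fun t => if l < g t then 1 else 0) :
    gridAvg N (fun t => (f t / 2) ^ r) ≤
      ε * gridAvg N (fun t => f t ^ r) + gridAvg N fun t => g t ^ r := by
  let layer (F : ℝ → ℝ) (l : ℝ) : ℝ :=
    gridAvg N fun t => (Iio (F t)).indicator (fun l => r * l ^ (r - 1)) l
  have hint (F : ℝ → ℝ) : IntegrableOn (layer F) (Ioi 0) :=
    (integrable_finsetSum _ fun m _ => integrableOn_indicator_Iio_rpow hr _).div_const _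
  have hlayer {F : ℝ → ℝ} (hF : ∀ t, 0 ≤ F t) :
      ∫ l in Ioi 0, layer F l = gridAvg N fun t => F t ^ r := by
    simp only [layer, gridAvg]
    rw [integral_div, integral_finsetSum _ fun m _ => integrableOn_indicator_Iio_rpow hr _]
    simp only [setIntegral_indicator_Iio_rpow hr (hF _)]
  have hite (F : ℝ → ℝ) (l : ℝ) :
      layer F l = r * l ^ (r - 1) * gridAvg N fun t => if l < F t then 1 else 0 := by
    simp only [layer, ← gridAvg_const_mul, indicator_apply, mem_Iio, mul_ite, mul_one, mul_zero]
  rw [← hlayer fun t => div_nonneg (hf t) zero_le_two, ← hlayer hf, ← hlayer hg,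
    ← integral_const_mul, ← integral_add ((hint f).const_mul ε) (hint g)]
  refine setIntegral_mono_on (hint _) (((hint f).const_mul ε).add (hint g)) measurableSet_Ioi
    fun l hl => ?_
  have hl0 : 0 ≤ r * l ^ (r - 1) := mul_nonneg hr.le (Real.rpow_nonneg (le_of_lt hl) _)
  have hhalf := mul_le_mul_of_nonneg_left (h l hl) hl0
  simp only [hite, lt_div_iff₀ (zero_lt_two' ℝ), mul_comm l 2]
  linarith

end LayerCake

section Window

variable {E : Type*} [NormedAddCommGroup E] {f g : ℕ → E} {l δ : ℝ} {n : ℕ}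

/-- The time window between the two stopping times of the good-`λ` argument: it opens once `g`
has exceeded `l`, and closes as soon as `g` exceeds `2 * l` or `f` or its increments are no longer
small compared with `l`. The increment `f (j + 1) - f j` with `j = k` is included because for Haar
sums its norm is already determined at time `k`. -/
def InWindow (f g : ℕ → E) (l δ : ℝ) (k : ℕ) : Prop :=
  (∃ j ≤ k, l < ‖g j‖) ∧
    ∀ j ≤ k, ‖g j‖ ≤ 2 * l ∧ ‖f j‖ ≤ δ * l ∧ ‖f (j + 1) - f j‖ ≤ 2 * (δ * l)

lemma exists_forall_lt_and_iff_lt {D : ℕ → Prop} (hD : Antitone D) (n : ℕ) :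
    ∃ b, ∀ k, k < n ∧ D k ↔ k < b := by
  have hex : ∃ k, ¬(k < n ∧ D k) := ⟨n, fun h => h.1.false⟩
  obtain ⟨b, hb, hmin⟩ : ∃ b, ¬(b < n ∧ D b) ∧ ∀ k < b, k < n ∧ D k :=
    ⟨Nat.find hex, Nat.find_spec hex, fun k hk => not_not.1 (Nat.find_min hex hk)⟩
  refine ⟨b, fun k => ⟨fun hk => ?_, hmin k⟩⟩
  by_contra! hle
  exact hb ⟨hle.trans_lt hk.1, hD hle hk.2⟩

lemma exists_filter_inWindow_eq_Ico (f g : ℕ → E) (l δ : ℝ) (n : ℕ) :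
    ∃ a b, (Finset.range n).filter (InWindow f g l δ) = Finset.Ico a b := by
  have hclosed : Antitone fun k => ∀ j ≤ k,
      ‖g j‖ ≤ 2 * l ∧ ‖f j‖ ≤ δ * l ∧ ‖f (j + 1) - f j‖ ≤ 2 * (δ * l) :=
    fun _ _ hij h k hk => h k (hk.trans hij)
  have hunopened : Antitone fun k => ¬∃ j ≤ k, l < ‖g j‖ :=
    fun _ _ hij h hk => h (hk.imp fun _ hk => ⟨hk.1.trans hij, hk.2⟩)
  obtain ⟨a, ha⟩ := exists_forall_lt_and_iff_lt hunopened n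
  obtain ⟨b, hb⟩ := exists_forall_lt_and_iff_lt hclosed n
  refine ⟨a, b, Finset.ext fun k => ?_⟩
  rw [Finset.mem_filter, Finset.mem_range, Finset.mem_Ico, InWindow, ← hb, ← not_lt, ← ha]
  exact ⟨fun ⟨hkn, hU, hD⟩ => ⟨fun h => h.2 hU, hkn, hD⟩,
    fun ⟨hU, hkn, hD⟩ => ⟨hkn, not_not.1 fun h => hU ⟨hkn, h⟩, hD⟩⟩

lemma sum_inWindow_eq_zero (h : ∀ j < n, ‖g j‖ ≤ l) (F : ℕ → E) :
    ∑ k ∈ Finset.range n with InWindow f g l δ k, F k = 0 := by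
  rw [Finset.filter_false_of_mem, Finset.sum_empty]
  rintro k hk ⟨⟨j, hjk, hj⟩, -⟩
  exact hj.not_ge (h j (hjk.trans_lt (Finset.mem_range.1 hk)))

lemma norm_sum_inWindow_le (hδl : 0 ≤ δ * l) (n : ℕ) :
    ‖∑ k ∈ Finset.range n with InWindow f g l δ k, (f (k + 1) - f k)‖ ≤ 4 * (δ * l) := by
  obtain ⟨a, b, hab⟩ := exists_filter_inWindow_eq_Ico f g l δ n
  have hwindow (k : ℕ) (hk : a ≤ k ∧ k < b) : InWindow f g l δ k :=
    (Finset.mem_filter.1 (hab ▸ Finset.mem_Ico.2 hk)).2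
  rw [hab]
  rcases le_or_gt b a with hba | hlt
  · simpa [Finset.Ico_eq_empty_of_le hba] using hδl
  obtain ⟨c, rfl⟩ := Nat.exists_eq_add_one_of_ne_zero (Nat.ne_zero_of_lt hlt)
  obtain ⟨-, hfa, -⟩ := (hwindow a ⟨le_rfl, hlt⟩).2 a le_rfl
  obtain ⟨-, hfc, hΔc⟩ := (hwindow c ⟨by omega, by omega⟩).2 c le_rfl
  rw [Finset.sum_Ico_sub f hlt.le]
  have htri := norm_add₃_le (a := f (c + 1) - f c) (b := f c) (c := -f a)
  rw [norm_neg, sub_add_cancel, ← sub_eq_add_neg] at htri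
  linarith

lemma half_le_norm_sum_inWindow (hl : 0 < l) (hδ : δ ≤ 1 / 4) (hg0 : g 0 = 0)
    (hg : ∃ j ≤ n, 2 * l < ‖g j‖) (hf : ∀ j ≤ n, ‖f j‖ ≤ δ * l)
    (hfg : ∀ j, ‖g (j + 1) - g j‖ = ‖f (j + 1) - f j‖) :
    l / 2 ≤ ‖∑ k ∈ Finset.range n with InWindow f g l δ k, (g (k + 1) - g k)‖ := by
  have hopen : ∃ j, l < ‖g j‖ := hg.imp fun j hj => by linarith [hj.2]
  have hclose : ∃ j, 2 * l < ‖g j‖ := hg.imp fun j hj => hj.2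
  set a := Nat.find hopen with ha
  set b := Nat.find hclose
  have hbn : b ≤ n := by
    obtain ⟨j, hjn, hj⟩ := hg
    exact (Nat.find_min' hclose hj).trans hjn
  have hab : a ≤ b := Nat.find_min' hopen (by linarith [Nat.find_spec hclose])
  have hΔ (j : ℕ) (hj : j < n) : ‖f (j + 1) - f j‖ ≤ 2 * (δ * l) := by
    linarith [norm_sub_le (f (j + 1)) (f j), hf (j + 1) hj, hf j hj.le]
  have hwindow : (Finset.range n).filter (InWindow f g l δ) = Finset.Ico a b := by
    ext k
    rw [Finset.mem_filter, Finset.mem_range, Finset.mem_Ico, Nat.find_le_iff, Nat.lt_find_iff]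
    constructor
    · rintro ⟨-, hex, hall⟩
      exact ⟨hex, fun j hj => not_lt.2 (hall j hj).1⟩
    · rintro ⟨hex, hall⟩
      have hkn : k < n := lt_of_lt_of_le ((Nat.lt_find_iff hclose k).2 hall) hbn
      exact ⟨hkn, hex, fun j hj =>
        ⟨not_lt.1 (hall j hj), hf j (by omega), hΔ j (by omega)⟩⟩
  have hga : ‖g a‖ ≤ 3 / 2 * l := by
    obtain ⟨c, hc⟩ : ∃ c, a = c + 1 := Nat.exists_eq_add_one_of_ne_zero fun h0 => by
      have := Nat.find_spec hopen
      rw [← ha, h0, hg0, norm_zero] at this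
      linarith
    have hgc : ‖g c‖ ≤ l := not_lt.1 (Nat.find_min hopen (by omega))
    have hjump := norm_le_norm_add_norm_sub (g c) (g (c + 1))
    rw [norm_sub_rev, hfg] at hjump
    rw [hc]
    nlinarith [hΔ c (by omega)]
  rw [hwindow, Finset.sum_Ico_sub g hab]
  linarith [norm_sub_norm_le (g b) (g a), Nat.find_spec hclose]

end Window

/-! ### Unconditionality of the Haar system -/

section Extrapolation

variable {E : Type*} [NormedAddCommGroup E] [NormedSpace ℝ E]

lemma norm_haarPartial_succ_sub (s : Finset DyadicI) (x : DyadicI → E) (k : ℕ) (t : ℝ) :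
    ‖haarPartial s x (k + 1) t - haarPartial s x k t‖ = ‖haarLevel s x k t‖ := by
  rw [haarPartial_succ, add_sub_cancel_left]

lemma isDyadicStep_inWindow (s : Finset DyadicI) (x y : DyadicI → E) (l δ : ℝ) (k : ℕ) :
    IsDyadicStep k fun t => InWindow (haarPartial s x · t) (haarPartial s y · t) l δ k :=
  fun t u htu => by
    have hx (j : ℕ) (hj : j ≤ k) : haarPartial s x j t = haarPartial s x j u :=
      (isDyadicStep_haarPartial s x j).mono hj htu
    have hy (j : ℕ) (hj : j ≤ k) : haarPartial s y j t = haarPartial s y j u :=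
      (isDyadicStep_haarPartial s y j).mono hj htu
    have hΔ (j : ℕ) (hj : j ≤ k) : ‖haarLevel s x j t‖ = ‖haarLevel s x j u‖ :=
      (isDyadicStep_norm_haarLevel s x j).mono hj htu
    simp only [InWindow, norm_haarPartial_succ_sub, eq_iff_iff]
    refine and_congr (exists_congr fun j => and_congr_right fun hj => by rw [hy j hj])
      (forall₂_congr fun j hj => by rw [hx j hj, hy j hj, hΔ j hj])

/-- The intervals of `s` at which the good-`λ` window of the martingales of `haarSum s x` and
`haarSum s y` is open; restricting to them stops both martingales. -/
def windowSupport (s : Finset DyadicI) (x y : DyadicI → E) (l δ : ℝ) : Finset DyadicI :=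
  {I ∈ s | InWindow (haarPartial s x · (lep I)) (haarPartial s y · (lep I)) l δ I.n}

variable {s : Finset DyadicI} {x y : DyadicI → E} {N : ℕ} {l δ : ℝ}

lemma haarSum_windowSupport (hN : ∀ I ∈ s, I.n < N) (z : DyadicI → E) (t : ℝ) :
    haarSum (windowSupport s x y l δ) z t =
      ∑ k ∈ Finset.range N with InWindow (haarPartial s x · t) (haarPartial s y · t) l δ k,
        (haarPartial s z (k + 1) t - haarPartial s z k t) := by
  simp only [haarPartial_succ s z, add_sub_cancel_left]
  exact haarSum_filter_of_isDyadicStep (isDyadicStep_inWindow s x y l δ) hN z t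

lemma norm_haarSum_windowSupport_rpow_le (hN : ∀ I ∈ s, I.n < N) {q : ℝ} (hq : 0 < q)
    (hδl : 0 ≤ δ * l) (t : ℝ) :
    ‖haarSum (windowSupport s x y l δ) x t‖ ^ q ≤
      (4 * (δ * l)) ^ q * if l < haarMax s y N t then 1 else 0 := by
  rw [haarSum_windowSupport hN x t]
  split_ifs with h
  · rw [mul_one]
    exact Real.rpow_le_rpow (norm_nonneg _) (norm_sum_inWindow_le hδl N) hq.le
  · rw [sum_inWindow_eq_zero fun j hj => haarMax_le_iff.1 (not_lt.1 h) j hj.le, norm_zero,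
      Real.zero_rpow hq.ne', mul_zero]

lemma half_rpow_le_norm_haarSum_windowSupport (hN : ∀ I ∈ s, I.n < N)
    (hxy : ∀ I, ‖y I‖ = ‖x I‖) {q : ℝ} (hq : 0 < q) (hl : 0 < l) (hδ : δ ≤ 1 / 4) {t : ℝ}
    (hy : 2 * l < haarMax s y N t) (hx : haarMax s x N t ≤ δ * l) :
    (l / 2) ^ q ≤ ‖haarSum (windowSupport s x y l δ) y t‖ ^ q := by
  rw [haarSum_windowSupport hN y t]
  refine Real.rpow_le_rpow (by positivity) ?_ hq.le
  refine half_le_norm_sum_inWindow hl hδ (haarPartial_zero s y t) (lt_haarMax_iff.1 hy)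
    (haarMax_le_iff.1 hx) fun j => ?_
  rw [norm_haarPartial_succ_sub, norm_haarPartial_succ_sub, norm_haarLevel_congr hxy]

lemma gridAvg_haarMax_good_lambda (hN : ∀ I ∈ s, I.n < N) (hxy : ∀ I, ‖y I‖ = ‖x I‖)
    {q β : ℝ} (hq : 0 < q) (hβ : 0 ≤ β)
    (h : ∀ u ⊆ s, gridAvg N (fun t => ‖haarSum u y t‖ ^ q) ≤
      β * gridAvg N fun t => ‖haarSum u x t‖ ^ q)
    (hδ0 : 0 < δ) (hδ : δ ≤ 1 / 4) (hl : 0 < l) :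
    gridAvg N (fun t => if 2 * l < haarMax s y N t then 1 else 0) ≤
      β * (8 * δ) ^ q * gridAvg N (fun t => if l < haarMax s y N t then 1 else 0) +
        gridAvg N fun t => if l < haarMax s x N t / δ then 1 else 0 := by
  set u := windowSupport s x y l δ
  have hlq : 0 < (l / 2) ^ q := Real.rpow_pos_of_pos (by positivity) q
  have hlower (t : ℝ) : (l / 2) ^ q * (if 2 * l < haarMax s y N t then 1 else 0) ≤
      ‖haarSum u y t‖ ^ q + (l / 2) ^ q * if l < haarMax s x N t / δ then 1 else 0 := by
    have hnorm : 0 ≤ ‖haarSum u y t‖ ^ q := Real.rpow_nonneg (norm_nonneg _) q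
    simp only [lt_div_iff₀' hδ0]
    split_ifs with hy hx hx
    · linarith
    · linarith [half_rpow_le_norm_haarSum_windowSupport hN hxy hq hl hδ hy (not_lt.1 hx)]
    all_goals linarith
  have hupper := gridAvg_mono (N := N) fun t =>
    norm_haarSum_windowSupport_rpow_le (x := x) (y := y) hN hq (mul_pos hδ0 hl).le t
  have hscale : (4 * (δ * l)) ^ q = (l / 2) ^ q * (8 * δ) ^ q := by
    rw [← Real.mul_rpow (by positivity) (by positivity)]
    ring_nf
  have hlow := gridAvg_mono (N := N) hlower
  rw [gridAvg_const_mul, gridAvg_add, gridAvg_const_mul] at hlow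
  rw [gridAvg_const_mul, hscale] at hupper
  refine le_of_mul_le_mul_left ?_ hlq
  linarith [h u (Finset.filter_subset _ _), mul_le_mul_of_nonneg_left hupper hβ]

/-- The Haar system is unconditional in `L^q_E`, with the constant stated for the `q`-th powers of
the norms. This is the UMD property at the single exponent `q`. -/
def HaarUnconditional (q : ℝ) (E : Type*) [NormedAddCommGroup E] [NormedSpace ℝ E] : Prop :=
  ∃ β : ℝ, 0 ≤ β ∧ ∀ (s : Finset DyadicI) (x : DyadicI → E) (ε : DyadicI → ℝ),
    (∀ I, ε I = 1 ∨ ε I = -1) →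
    ∫ t in Icc (0 : ℝ) 1, ‖haarSum s (fun I => ε I • x I) t‖ ^ q ≤
      β * ∫ t in Icc (0 : ℝ) 1, ‖haarSum s x t‖ ^ q

lemma norm_smul_of_eq_one_or_neg_one {a : ℝ} (ha : a = 1 ∨ a = -1) (v : E) : ‖a • v‖ = ‖v‖ := by
  rcases ha with rfl | rfl <;> simp

lemma exists_pos_le_mul_rpow_le {q c : ℝ} (hq : 0 < q) (hc : 0 < c) (β : ℝ) :
    ∃ δ : ℝ, 0 < δ ∧ δ ≤ 1 / 4 ∧ β * (8 * δ) ^ q ≤ c := by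
  have hlim : Filter.Tendsto (fun δ : ℝ => β * (8 * δ) ^ q) (nhds 0) (nhds 0) := by
    have hcont : ContinuousAt (fun δ : ℝ => β * (8 * δ) ^ q) 0 :=
      continuousAt_const.mul (ContinuousAt.rpow_const (by fun_prop) (Or.inr hq.le))
    simpa [ContinuousAt, Real.zero_rpow hq.ne'] using hcont
  have hsmall : ∀ᶠ δ : ℝ in nhdsWithin 0 (Ioi 0), β * (8 * δ) ^ q ≤ c ∧ δ ≤ 1 / 4 :=
    nhdsWithin_le_nhds ((hlim.eventually_le_const hc).and (eventually_le_nhds (by norm_num)))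
  obtain ⟨δ, ⟨hδc, hδ⟩, hδ0⟩ := (hsmall.and self_mem_nhdsWithin).exists
  exact ⟨δ, hδ0, hδ, hδc⟩

lemma gridAvg_haarMax_rpow_le_of_good_lambda {r c : ℝ} (hr : 0 < r) (hδ0 : 0 < δ)
    (hc : c ≤ (1 / 2) ^ r / 2)
    (h : ∀ l > 0, gridAvg N (fun t => if 2 * l < haarMax s y N t then 1 else 0) ≤
      c * gridAvg N (fun t => if l < haarMax s y N t then 1 else 0) +
        gridAvg N fun t => if l < haarMax s x N t / δ then 1 else 0) :
    gridAvg N (fun t => haarMax s y N t ^ r) ≤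
      2 * 2 ^ r * (1 / δ) ^ r * gridAvg N fun t => haarMax s x N t ^ r := by
  have hmoments := gridAvg_rpow_le_of_good_lambda (haarMax_nonneg s y N)
    (fun t => div_nonneg (haarMax_nonneg s x N t) hδ0.le) hr h
  have hscale {a : ℝ} (ha : 0 < a) (z : DyadicI → E) (t : ℝ) :
      (haarMax s z N t / a) ^ r = (1 / a) ^ r * haarMax s z N t ^ r := by
    rw [← Real.mul_rpow (by positivity) (haarMax_nonneg s z N t), one_div_mul_eq_div]
  simp only [hscale two_pos, hscale hδ0, gridAvg_const_mul] at hmoments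
  have habsorb := mul_le_mul_of_nonneg_right hc
    (gridAvg_nonneg (N := N) fun t => Real.rpow_nonneg (haarMax_nonneg s y N t) r)
  have htwo : (2 : ℝ) ^ r * (1 / 2) ^ r = 1 := by
    rw [← Real.mul_rpow zero_le_two (by norm_num)]; norm_num
  have hhalf := mul_le_mul_of_nonneg_left (hmoments.trans (add_le_add_left habsorb _))
    (Real.rpow_nonneg zero_le_two r)
  linear_combination 2 * hhalf - gridAvg N (fun t => haarMax s y N t ^ r) * htwo

theorem HaarUnconditional.extrapolate {q r : ℝ} (hq : 0 < q) (hr : 1 < r)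
    (h : HaarUnconditional q E) : HaarUnconditional r E := by
  obtain ⟨β, hβ, hβq⟩ := h
  obtain ⟨δ, hδ0, hδ, hδβ⟩ :=
    exists_pos_le_mul_rpow_le hq (show (0 : ℝ) < (1 / 2) ^ r / 2 by positivity) β
  have : 0 < r - 1 := by linarith
  refine ⟨2 * 2 ^ r * (1 / δ) ^ r * (r / (r - 1)) ^ r, by positivity, fun s x ε hε => ?_⟩
  obtain ⟨N, hN⟩ := exists_forall_level_lt s
  set y : DyadicI → E := fun I => ε I • x I
  have hgood (l : ℝ) (hl : 0 < l) := gridAvg_haarMax_good_lambda hN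
    (fun I => norm_smul_of_eq_one_or_neg_one (hε I) (x I)) hq hβ (fun u hu => by
      have huN : ∀ I ∈ u, I.n < N := fun I hI => hN I (hu hI)
      rw [← integral_norm_haarSum_rpow huN, ← integral_norm_haarSum_rpow huN]
      exact hβq u x ε hε) hδ0 hδ hl
  rw [integral_norm_haarSum_rpow hN, integral_norm_haarSum_rpow hN]
  calc gridAvg N (fun t => ‖haarSum s y t‖ ^ r)
      ≤ gridAvg N fun t => haarMax s y N t ^ r := gridAvg_mono fun t => by
        rw [← haarPartial_eq_haarSum hN]
        exact Real.rpow_le_rpow (norm_nonneg _) (norm_haarPartial_le_haarMax s y N t) (by linarith)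
    _ ≤ 2 * 2 ^ r * (1 / δ) ^ r * gridAvg N fun t => haarMax s x N t ^ r :=
        gridAvg_haarMax_rpow_le_of_good_lambda (by linarith) hδ0 hδβ hgood
    _ ≤ 2 * 2 ^ r * (1 / δ) ^ r * ((r / (r - 1)) ^ r * gridAvg N fun t => ‖haarSum s x t‖ ^ r) := by
        simp only [← haarPartial_eq_haarSum hN x]
        gcongr
        exact gridAvg_haarMax_rpow_le s x hr N
    _ = _ := (mul_assoc _ _ _).symm

end Extrapolation

section HilbertValued

lemma gridAvg_sq_norm_haarPartial {H : Type*} [NormedAddCommGroup H] [InnerProductSpace ℝ H]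
    (s : Finset DyadicI) (x : DyadicI → H) {k N : ℕ} (hk : k ≤ N) :
    gridAvg N (fun t => ‖haarPartial s x k t‖ ^ 2) =
      ∑ j ∈ Finset.range k, gridAvg N fun t => ‖haarLevel s x j t‖ ^ 2 := by
  induction k with
  | zero => simp [haarPartial_zero, gridAvg]
  | succ k ih =>
    have hswap := gridAvg_comp_halfSwap
      ((isDyadicStep_haarPartial s x (k + 1)).comp (‖·‖ ^ 2)) hk
    have hpar (t : ℝ) : ‖haarPartial s x (k + 1) t‖ ^ 2 +
        ‖haarPartial s x (k + 1) (halfSwap k t)‖ ^ 2 =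
        2 * (‖haarPartial s x k t‖ ^ 2 + ‖haarLevel s x k t‖ ^ 2) := by
      rw [haarPartial_succ_halfSwap, haarPartial_succ]
      have := parallelogram_law_with_norm ℝ (haarPartial s x k t) (haarLevel s x k t)
      linarith
    have havg := congrArg (gridAvg N) (funext hpar)
    rw [gridAvg_add, gridAvg_const_mul, gridAvg_add, hswap, ih (Nat.le_of_succ_le hk)] at havg
    rw [Finset.sum_range_succ]
    linarith

theorem haarUnconditional_two (H : Type*) [NormedAddCommGroup H] [InnerProductSpace ℝ H] :
    HaarUnconditional 2 H := by
  refine ⟨1, zero_le_one, fun s x ε hε => ?_⟩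
  obtain ⟨N, hN⟩ := exists_forall_level_lt s
  rw [integral_norm_haarSum_rpow hN, integral_norm_haarSum_rpow hN, one_mul]
  simp only [Real.rpow_two, ← haarPartial_eq_haarSum hN, gridAvg_sq_norm_haarPartial _ _ le_rfl,
    norm_haarLevel_congr fun I => norm_smul_of_eq_one_or_neg_one (hε I) (x I), le_refl]

theorem haarUnconditional_lp {ι E : Type*} [NormedAddCommGroup E] [NormedSpace ℝ E] {q : ℝ≥0∞}
    [Fact (1 ≤ q)] (hq : 0 < q.toReal) (h : HaarUnconditional q.toReal E) :
    HaarUnconditional q.toReal (lp (fun _ : ι => E) q) := by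
  obtain ⟨β, hβ, hβq⟩ := h
  have hcoord (s : Finset DyadicI) (x : DyadicI → lp (fun _ : ι => E) q) (t : ℝ) (i : ι) :
      haarSum s x t i = haarSum s (fun I => x I i) t := by
    simp only [haarSum, lp.coeFn_sum, Finset.sum_apply, lp.coeFn_smul, Pi.smul_apply]
  have hasSum_integral (s : Finset DyadicI) (x : DyadicI → lp (fun _ : ι => E) q) :
      HasSum (fun i => ∫ t in Icc (0 : ℝ) 1, ‖haarSum s (fun I => x I i) t‖ ^ q.toReal)
        (∫ t in Icc (0 : ℝ) 1, ‖haarSum s x t‖ ^ q.toReal) := by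
    obtain ⟨N, hN⟩ := exists_forall_level_lt s
    simp only [integral_norm_haarSum_rpow hN, gridAvg]
    simp only [← hcoord]
    exact (hasSum_sum fun m _ => lp.hasSum_norm (E := fun _ : ι => E) hq _).div_const _
  refine ⟨β, hβ, fun s x ε hε => ?_⟩
  refine hasSum_le (fun i => ?_) (hasSum_integral s _) ((hasSum_integral s x).mul_left β)
  exact hβq s (fun I => x I i) ε hε

theorem isUMD_of_haarUnconditional {E : Type*} [NormedAddCommGroup E] [NormedSpace ℝ E]
    (h : ∀ r : ℝ, 1 < r → HaarUnconditional r E) : IsUMD E := by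
  intro r hr
  obtain ⟨β, hβ, hβr⟩ := h r hr
  refine ⟨β ^ (1 / r), fun s x ε hε => ?_⟩
  exact (Real.rpow_le_rpow (integral_norm_haarSum_rpow_nonneg s _ r) (hβr s x ε hε)
    (by positivity)).trans_eq (Real.mul_rpow hβ (integral_norm_haarSum_rpow_nonneg s x r))

theorem isUMD_lp (ι : Type*) {H : Type*} [NormedAddCommGroup H] [InnerProductSpace ℝ H]
    {q : ℝ≥0∞} [Fact (1 ≤ q)] (hq : 1 < q.toReal) : IsUMD (lp (fun _ : ι => H) q) :=
  isUMD_of_haarUnconditional fun _ hr =>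
    (haarUnconditional_lp (by linarith)
      ((haarUnconditional_two H).extrapolate two_pos hq)).extrapolate (by linarith) hr

end HilbertValued

/-! ### From a vector-valued to a scalar inequality -/

section Extraction

variable {E : Type*} [NormedAddCommGroup E] [NormedSpace ℝ E]

lemma haarSum_const_smul (s : Finset DyadicI) (x : DyadicI → E) (c t : ℝ) :
    haarSum s (fun I => c • x I) t = c • haarSum s x t := by
  rw [haarSum, haarSum, Finset.smul_sum]
  exact Finset.sum_congr rfl fun I _ => smul_comm _ _ _

lemma LpNormV_nonneg (p : ℝ) (s : Finset DyadicI) (x : DyadicI → E) : 0 ≤ LpNormV p s x :=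
  Real.rpow_nonneg (integral_norm_haarSum_rpow_nonneg s x p) _

lemma LpNormV_rpow {p : ℝ} (hp : 0 < p) (s : Finset DyadicI) (x : DyadicI → E) :
    LpNormV p s x ^ p = ∫ t in Icc (0 : ℝ) 1, ‖haarSum s x t‖ ^ p := by
  change ((∫ t in Icc (0 : ℝ) 1, ‖haarSum s x t‖ ^ p) ^ (1 / p)) ^ p = _
  rw [← Real.rpow_mul (integral_norm_haarSum_rpow_nonneg s x p), one_div_mul_cancel hp.ne',
    Real.rpow_one]

lemma LpNormV_const_smul {p c : ℝ} (hp : 0 < p) (hc : 0 ≤ c) (s : Finset DyadicI)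
    (x : DyadicI → E) : LpNormV p s (fun I => c • x I) = c * LpNormV p s x := by
  refine (Real.rpow_left_inj (LpNormV_nonneg p s _) (mul_nonneg hc (LpNormV_nonneg p s x))
    hp.ne').1 ?_
  rw [Real.mul_rpow hc (LpNormV_nonneg p s x), LpNormV_rpow hp, LpNormV_rpow hp,
    ← integral_const_mul]
  simp only [haarSum_const_smul, norm_smul, Real.norm_of_nonneg hc,
    Real.mul_rpow hc (norm_nonneg _)]

lemma rearrCoef_const_smul (τ : DyadicI → DyadicI) (p : ℝ) (s : Finset DyadicI)
    (x : DyadicI → E) (c : ℝ) :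
    rearrCoef τ p s (fun I => c • x I) = fun J => c • rearrCoef τ p s x J := by
  ext J
  simp only [rearrCoef, Finset.smul_sum, smul_ite, smul_zero, smul_comm c]

lemma LpNormV_rearrCoef_le {τ : DyadicI → DyadicI} {p : ℝ} (hp : 0 < p)
    (h : lpOpNorm τ p E < ⊤) (s : Finset DyadicI) (x : DyadicI → E) :
    LpNormV p (s.image τ) (rearrCoef τ p s x) ≤ (lpOpNorm τ p E).toReal * LpNormV p s x := by
  have hunit (y : DyadicI → E) (hy : LpNormV p s y ≤ 1) :
      LpNormV p (s.image τ) (rearrCoef τ p s y) ≤ (lpOpNorm τ p E).toReal :=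
    (ENNReal.ofReal_le_iff_le_toReal h.ne).1 <|
      le_iSup_of_le s <| le_iSup_of_le y <| le_iSup_of_le hy le_rfl
  -- Dividing by `M > ‖f‖` rather than by `‖f‖` avoids treating `‖f‖ = 0` separately.
  have hlarge (M : ℝ) (hM : LpNormV p s x < M) :
      LpNormV p (s.image τ) (rearrCoef τ p s x) ≤ (lpOpNorm τ p E).toReal * M := by
    have hM0 : 0 < M := (LpNormV_nonneg p s x).trans_lt hM
    have hscaled := hunit (fun I => M⁻¹ • x I) <| by
      rw [LpNormV_const_smul hp (by positivity), inv_mul_le_one₀ hM0]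
      exact hM.le
    rwa [rearrCoef_const_smul, LpNormV_const_smul hp (by positivity), inv_mul_le_iff₀ hM0,
      mul_comm] at hscaled
  have hlim : Filter.Tendsto (fun M => (lpOpNorm τ p E).toReal * M)
      (nhdsWithin (LpNormV p s x) (Ioi (LpNormV p s x)))
      (nhds ((lpOpNorm τ p E).toReal * LpNormV p s x)) :=
    ((continuous_const_mul _).tendsto _).mono_left nhdsWithin_le_nhds
  exact ge_of_tendsto hlim (Filter.eventually_of_mem self_mem_nhdsWithin hlarge)

lemma sum_ite_apply_eq {ι κ M : Type*} [AddCommMonoid M] {τ : ι → κ}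
    (hτ : Function.Injective τ) {L : Finset ι} {i : ι} (hi : i ∈ L) (a : ι → M) :
    (∑ j ∈ L, if τ j = τ i then a j else 0) = a i := by
  simp only [hτ.eq_iff, Finset.sum_ite_eq', hi, if_true]

lemma haarSum_image_rearrCoef {τ : DyadicI → DyadicI} (hτ : Function.Injective τ) (p : ℝ)
    (s : Finset DyadicI) (x : DyadicI → E) (t : ℝ) :
    haarSum (s.image τ) (rearrCoef τ p s x) t =
      ∑ I ∈ s, haar (τ I) t • (len I / len (τ I)) ^ (1 / p) • x I := by
  rw [haarSum, Finset.sum_image hτ.injOn]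
  exact Finset.sum_congr rfl fun I hI => congrArg _ (sum_ite_apply_eq hτ hI _)

lemma integral_norm_rearranged_rpow_le {τ : DyadicI → DyadicI} (hτ : Function.Injective τ)
    {p : ℝ} (hp : 0 < p) (h : lpOpNorm τ p E < ⊤) (s : Finset DyadicI) (x : DyadicI → E) :
    ∫ t in Icc (0 : ℝ) 1, ‖∑ I ∈ s, haar (τ I) t • (len I / len (τ I)) ^ (1 / p) • x I‖ ^ p ≤
      (lpOpNorm τ p E).toReal ^ p * ∫ t in Icc (0 : ℝ) 1, ‖haarSum s x t‖ ^ p := by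
  have hpow := Real.rpow_le_rpow (LpNormV_nonneg p _ _) (LpNormV_rearrCoef_le hp h s x) hp.le
  rw [Real.mul_rpow ENNReal.toReal_nonneg (LpNormV_nonneg p s x), LpNormV_rpow hp,
    LpNormV_rpow hp] at hpow
  simpa only [haarSum_image_rearrCoef hτ] using hpow

lemma norm_sum_lp_single_rpow {ι : Type*} {q : ℝ≥0∞} [Fact (1 ≤ q)] (hq : 0 < q.toReal)
    (s : Finset ι) (z : ι → ℝ) (p : ℝ) :
    ‖∑ i ∈ s, lp.single (E := fun _ : ι => ℝ) q i (z i)‖ ^ p =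
      (∑ i ∈ s, |z i| ^ q.toReal) ^ (p / q.toReal) := by
  have hsum := lp.norm_sum_single (E := fun _ : ι => ℝ) hq z s
  simp only [Real.norm_eq_abs] at hsum
  rw [← hsum, ← Real.rpow_mul (norm_nonneg _), mul_div_cancel₀ _ hq.ne']

lemma abs_haar_mul_rpow {q c : ℝ} (hq : 0 < q) (hc : 0 ≤ c) (I : DyadicI) (t : ℝ) :
    |haar I t * c ^ (1 / q)| ^ q = c * ind I t := by
  have hind : ind I t ^ q = ind I t := by
    by_cases ht : t ∈ toSet I
    · rw [ind_of_mem ht, Real.one_rpow]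
    · rw [ind_of_notMem ht, Real.zero_rpow hq.ne']
  rw [abs_mul, abs_haar, abs_of_nonneg (Real.rpow_nonneg hc _),
    Real.mul_rpow (ind_nonneg I t) (Real.rpow_nonneg hc _), ← Real.rpow_mul hc,
    one_div_mul_cancel hq.ne', Real.rpow_one, hind, mul_comm]

/-- The positive form of the `L^r` bound for the rearrangement `τ`: the Haar functions are
replaced by the characteristic functions `1_I` and the coefficients are non-negative. The constant
is that of the `r`-th powers of the norms. -/
def PositiveRearrBound (τ : DyadicI → DyadicI) (r C : ℝ) : Prop :=
  ∀ (s : Finset DyadicI) (c : DyadicI → ℝ), (∀ I, 0 ≤ c I) →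
    ∫ t in Icc (0 : ℝ) 1, (∑ I ∈ s, (len I / len (τ I)) ^ (1 / r) * c I * ind (τ I) t) ^ r ≤
      C * ∫ t in Icc (0 : ℝ) 1, (∑ I ∈ s, c I * ind I t) ^ r

/-- In `ℓ^q` distinct Haar functions may be given disjointly supported coefficients, which turns
the norm of a Haar expansion into an `ℓ^q` sum of characteristic functions. -/
theorem positiveRearrBound_of_lpOpNorm_lp_lt_top {τ : DyadicI → DyadicI}
    (hτ : Function.Injective τ) {p : ℝ} (hp : 0 < p) {q : ℝ≥0∞} [Fact (1 ≤ q)]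
    (hq : 0 < q.toReal) (h : lpOpNorm τ p (lp (fun _ : DyadicI => ℝ) q) < ⊤) :
    PositiveRearrBound τ (p / q.toReal)
      ((lpOpNorm τ p (lp (fun _ : DyadicI => ℝ) q)).toReal ^ p) := by
  intro s c hc
  let x : DyadicI → lp (fun _ : DyadicI => ℝ) q := fun I => lp.single q I (c I ^ (1 / q.toReal))
  have hsource (t : ℝ) :
      ‖haarSum s x t‖ ^ p = (∑ I ∈ s, c I * ind I t) ^ (p / q.toReal) := by
    simp only [haarSum, x, ← lp.single_smul, smul_eq_mul, norm_sum_lp_single_rpow hq,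
      abs_haar_mul_rpow hq (hc _)]
  have hratio (I : DyadicI) : 0 ≤ len I / len (τ I) := (div_pos (len_pos I) (len_pos _)).le
  have hroot (I : DyadicI) : (len I / len (τ I)) ^ (1 / p) * c I ^ (1 / q.toReal) =
      ((len I / len (τ I)) ^ (1 / (p / q.toReal)) * c I) ^ (1 / q.toReal) := by
    rw [Real.mul_rpow (Real.rpow_nonneg (hratio I) _) (hc I), ← Real.rpow_mul (hratio I)]
    congr 2
    field_simp
  have htarget (t : ℝ) :
      ‖∑ I ∈ s, haar (τ I) t • (len I / len (τ I)) ^ (1 / p) • x I‖ ^ p =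
        (∑ I ∈ s, (len I / len (τ I)) ^ (1 / (p / q.toReal)) * c I * ind (τ I) t) ^
          (p / q.toReal) := by
    simp only [x, ← lp.single_smul, smul_eq_mul, hroot, norm_sum_lp_single_rpow hq,
      abs_haar_mul_rpow hq (mul_nonneg (Real.rpow_nonneg (hratio _) _) (hc _))]
  simpa only [hsource, htarget] using integral_norm_rearranged_rpow_le hτ hp h s x

end Extraction

/-! ### Carleson packing conditions -/

namespace DyadicI

lemma measurableSet_toSet (I : DyadicI) : MeasurableSet (toSet I) := measurableSet_Ico

lemma volume_toSet (I : DyadicI) : volume (toSet I) = ENNReal.ofReal (len I) := by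
  rw [toSet, Real.volume_Ico, add_sub_cancel_left]

lemma volume_real_toSet (I : DyadicI) : volume.real (toSet I) = len I := by
  rw [measureReal_def, volume_toSet, ENNReal.toReal_ofReal (len_pos I).le]

lemma len_mul_setAverage (I : DyadicI) (F : ℝ → ℝ) :
    len I * ⨍ t in toSet I, F t = ∫ t in toSet I, F t := by
  rw [setAverage_eq, volume_real_toSet, smul_eq_mul, mul_inv_cancel_left₀ (len_pos I).ne']

lemma sum_mul_setIntegral_toSet {ι : Type*} {s : Finset ι} {σ : ι → DyadicI} {B : Set ℝ}
    (hσ : ∀ i ∈ s, toSet (σ i) ⊆ B) {F : ℝ → ℝ} (hF : IntegrableOn F B) (c : ι → ℝ) :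
    ∑ i ∈ s, c i * ∫ t in toSet (σ i), F t =
      ∫ t in B, (∑ i ∈ s, c i * ind (σ i) t) * F t := by
  have hind (i : ι) (t : ℝ) :
      c i * ind (σ i) t * F t = c i * (toSet (σ i)).indicator F t := by
    rw [mul_assoc, ind, ← Set.indicator_mul_left]
    simp only [one_mul]
  simp only [Finset.sum_mul, hind]
  rw [integral_finsetSum _ fun i _ => (hF.indicator (measurableSet_toSet _)).const_mul _]
  refine Finset.sum_congr rfl fun i hi => ?_
  rw [integral_const_mul, setIntegral_indicator (measurableSet_toSet _),
    inter_eq_self_of_subset_right (hσ i hi)]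

lemma sum_mul_len {ι : Type*} {s : Finset ι} {σ : ι → DyadicI} {B : Set ℝ}
    (hσ : ∀ i ∈ s, toSet (σ i) ⊆ B) (hB : volume B ≠ ⊤) (c : ι → ℝ) :
    ∑ i ∈ s, c i * len (σ i) = ∫ t in B, ∑ i ∈ s, c i * ind (σ i) t := by
  simpa [volume_real_toSet] using
    sum_mul_setIntegral_toSet hσ (integrableOn_const (C := (1 : ℝ)) hB) c

end DyadicI

lemma isDyadicStep_sum_mul_ind {ι : Type*} {s : Finset ι} {σ : ι → DyadicI} {N : ℕ}
    (hN : ∀ i ∈ s, (σ i).n ≤ N) (c : ι → ℝ) :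
    IsDyadicStep N fun t => ∑ i ∈ s, c i * ind (σ i) t :=
  IsDyadicStep.sum fun i hi => ((isDyadicStep_ind (σ i)).mono (hN i hi)).comp (c i * ·)

lemma IsDyadicStep.integrableOn_toSet {N : ℕ} {F : ℝ → ℝ} (hF : IsDyadicStep N F)
    (I : DyadicI) : IntegrableOn F (toSet I) :=
  hF.integrableOn.mono_set (toSet_subset_Icc I)

lemma IsDyadicStep.map_setAverage_le {N : ℕ} {F : ℝ → ℝ} (hF : IsDyadicStep N F)
    (hF0 : ∀ t, 0 ≤ F t) {φ : ℝ → ℝ} (hφ : ConvexOn ℝ (Ici 0) φ)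
    (hφc : ContinuousOn φ (Ici 0)) (I : DyadicI) :
    φ (⨍ t in toSet I, F t) ≤ ⨍ t in toSet I, φ (F t) := by
  refine hφ.map_set_average_le hφc isClosed_Ici ?_ ?_ (ae_of_all _ hF0)
    (hF.integrableOn_toSet I) ((hF.comp φ).integrableOn_toSet I)
  · simp [volume_toSet, len_pos I]
  · simp [volume_toSet]

/-- The Carleson packing condition with constant `C` for the weights `b` on the dyadic intervals
of `s`. Unlike in `carleson`, the supremum runs over all dyadic intervals `K`. -/
def IsCarleson (s : Finset DyadicI) (b : DyadicI → ℝ) (C : ℝ) : Prop :=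
  ∀ K : DyadicI, ∑ J ∈ s with toSet J ⊆ toSet K, b J * len J ≤ C * len K

lemma IsCarleson.mono {s u : Finset DyadicI} {b : DyadicI → ℝ} {C : ℝ} (h : IsCarleson s b C)
    (hus : u ⊆ s) (hb : ∀ I, 0 ≤ b I) : IsCarleson u b C := fun K =>
  (Finset.sum_le_sum_of_subset_of_nonneg (Finset.filter_subset_filter _ hus)
    fun I _ _ => mul_nonneg (hb I) (len_pos I).le).trans (h K)

section Telescoping

/-- The sum of `a` over the intervals of `s` that contain `J`. -/
def sumAbove (s : Finset DyadicI) (a : DyadicI → ℝ) (J : DyadicI) : ℝ :=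
  ∑ K ∈ s with toSet J ⊆ toSet K, a K

/-- The contribution of `J` to `φ (∑ K, a K)` when this is telescoped along a chain of dyadic
intervals, taken in decreasing order. -/
def increment (φ : ℝ → ℝ) (s : Finset DyadicI) (a : DyadicI → ℝ) (J : DyadicI) : ℝ :=
  φ (sumAbove s a J) - φ (sumAbove s a J - a J)

variable {φ : ℝ → ℝ} {s : Finset DyadicI} {a b : DyadicI → ℝ} {C t : ℝ}

lemma sumAbove_sub_nonneg (ha : ∀ J, 0 ≤ a J) {J : DyadicI} (hJ : J ∈ s) :
    0 ≤ sumAbove s a J - a J :=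
  sub_nonneg.2 <| Finset.single_le_sum (f := a) (fun K _ => ha K)
    (Finset.mem_filter.2 ⟨hJ, subset_rfl⟩)

lemma sumAbove_nonneg (s : Finset DyadicI) (ha : ∀ J, 0 ≤ a J) (J : DyadicI) :
    0 ≤ sumAbove s a J :=
  Finset.sum_nonneg fun K _ => ha K

lemma map_sum_eq_sum_increment (h0 : φ 0 = 0) (a : DyadicI → ℝ) (ht : ∀ J ∈ s, t ∈ toSet J) :
    φ (∑ J ∈ s, a J) = ∑ J ∈ s, increment φ s a J := by
  induction s using Finset.induction_on_max_value DyadicI.n with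
  | empty => simpa using h0
  | insert I s hI hmax ih =>
    obtain ⟨htI, hts⟩ := (Finset.forall_mem_insert _ _ _).1 ht
    have hbottom : sumAbove (insert I s) a I = a I + ∑ J ∈ s, a J := by
      rw [sumAbove, Finset.filter_true_of_mem, Finset.sum_insert hI]
      exact (Finset.forall_mem_insert _ _ _).2
        ⟨subset_rfl, fun K hK => toSet_subset_of_mem htI (hts K hK) (hmax K hK)⟩
    have habove (J : DyadicI) (hJ : J ∈ s) : sumAbove (insert I s) a J = sumAbove s a J := by
      rw [sumAbove, sumAbove, Finset.filter_insert, if_neg]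
      intro hJI
      have hIJ := eq_of_mem_of_level_eq htI (hts J hJ)
        ((level_le_of_subset hJI).antisymm (hmax J hJ))
      exact hI (hIJ ▸ hJ)
    have hrest : ∑ J ∈ s, increment φ (insert I s) a J = φ (∑ J ∈ s, a J) := by
      rw [ih hts]
      exact Finset.sum_congr rfl fun J hJ => by rw [increment, increment, habove J hJ]
    rw [Finset.sum_insert hI, Finset.sum_insert hI, hrest, increment, hbottom,
      add_sub_cancel_left, sub_add_cancel]

lemma map_sum_filter_eq_sum_increment (h0 : φ 0 = 0) (s : Finset DyadicI) (a : DyadicI → ℝ)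
    {P : DyadicI → Prop} (hP : ∀ J K, P J → toSet J ⊆ toSet K → P K)
    (ht : ∀ J, P J → t ∈ toSet J) :
    φ (∑ J ∈ s with P J, a J) = ∑ J ∈ s with P J, increment φ s a J := by
  rw [map_sum_eq_sum_increment h0 a fun J hJ => ht J (Finset.mem_filter.1 hJ).2]
  refine Finset.sum_congr rfl fun J hJ => ?_
  have habove : sumAbove ({K ∈ s | P K}) a J = sumAbove s a J := by
    rw [sumAbove, sumAbove, Finset.filter_filter]
    refine Finset.sum_congr (Finset.filter_congr fun K _ => ?_) fun _ _ => rfl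
    exact and_iff_right_of_imp (hP J K (Finset.mem_filter.1 hJ).2)
  rw [increment, increment, habove]

lemma map_sumAbove (h0 : φ 0 = 0) (s : Finset DyadicI) (a : DyadicI → ℝ) (J : DyadicI) :
    φ (sumAbove s a J) = ∑ K ∈ s with toSet J ⊆ toSet K, increment φ s a K :=
  map_sum_filter_eq_sum_increment h0 s a (fun _ _ hJK hKL => hJK.trans hKL)
    fun _ hJK => hJK (lep_mem_toSet J)

lemma map_sum_mul_ind (h0 : φ 0 = 0) (s : Finset DyadicI) (a : DyadicI → ℝ) (t : ℝ) :
    φ (∑ J ∈ s, a J * ind J t) = ∑ J ∈ s, increment φ s a J * ind J t := by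
  have hfilter (c : DyadicI → ℝ) :
      ∑ J ∈ s, c J * ind J t = ∑ J ∈ s with t ∈ toSet J, c J := by
    simp only [ind, indicator_apply, mul_ite, mul_one, mul_zero, Finset.sum_filter]
  rw [hfilter, hfilter]
  exact map_sum_filter_eq_sum_increment h0 s a (fun _ _ hJ hJK => hJK hJ) fun _ hJ => hJ

lemma integral_map_sum_mul_ind (h0 : φ 0 = 0) (s : Finset DyadicI) (a : DyadicI → ℝ) :
    ∫ t in Icc (0 : ℝ) 1, φ (∑ J ∈ s, a J * ind J t) = ∑ J ∈ s, increment φ s a J * len J := by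
  simp only [map_sum_mul_ind h0]
  exact (sum_mul_len (fun J _ => toSet_subset_Icc J) (by simp) _).symm

theorem IsCarleson.sum_mul_map_sumAbove_le (hb : IsCarleson s b C) (h0 : φ 0 = 0)
    (hφ : MonotoneOn φ (Ici 0)) (ha : ∀ J, 0 ≤ a J) :
    ∑ J ∈ s, b J * len J * φ (sumAbove s a J) ≤
      C * ∫ t in Icc (0 : ℝ) 1, φ (∑ J ∈ s, a J * ind J t) := by
  rw [integral_map_sum_mul_ind h0]
  simp only [map_sumAbove h0, Finset.sum_filter, Finset.mul_sum]
  rw [Finset.sum_comm]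
  refine Finset.sum_le_sum fun K hK => ?_
  have hinc : 0 ≤ increment φ s a K :=
    sub_nonneg.2 <| hφ (sumAbove_sub_nonneg ha hK) (sumAbove_nonneg s ha K)
      (sub_le_self _ (ha K))
  calc ∑ J ∈ s, b J * len J * (if toSet J ⊆ toSet K then increment φ s a K else 0)
      = increment φ s a K * ∑ J ∈ s with toSet J ⊆ toSet K, b J * len J := by
        simp only [mul_ite, mul_zero, ← Finset.sum_filter, Finset.mul_sum, mul_comm]
    _ ≤ increment φ s a K * (C * len K) := mul_le_mul_of_nonneg_left (hb K) hinc
    _ = C * (increment φ s a K * len K) := mul_left_comm _ _ _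

end Telescoping

section CarlesonEmbedding

lemma rpow_sub_sub_rpow_le {r u β g : ℝ} (hr : 1 < r) (hβ : 0 ≤ β) (hg : 0 ≤ g)
    (hu : 0 ≤ u - β * g) :
    u ^ r - (u - β * g) ^ r ≤ β * (r ^ r * g ^ r / r + (1 - 1 / r) * u ^ r) := by
  have hr0 : 0 < r := by linarith
  have hu0 : 0 ≤ u := hu.trans (sub_le_self _ (mul_nonneg hβ hg))
  have huu : u * u ^ (r - 1) = u ^ r := by
    rw [← Real.rpow_one_add' hu0 (by linarith), add_sub_cancel]
  have hconvex : u ^ r - (u - β * g) ^ r ≤ β * (r * g * u ^ (r - 1)) := by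
    have hyoung := mul_le_mul_of_nonneg_left (mul_rpow_sub_one_le hr hu hu0) hr0.le
    rw [sub_mul, huu, mul_add, mul_div_cancel₀ _ hr0.ne', ← mul_assoc r (1 - 1 / r),
      mul_one_sub, mul_one_div_cancel hr0.ne'] at hyoung
    linarith
  have hyoung := mul_rpow_sub_one_le hr (mul_nonneg hr0.le hg) hu0
  rw [Real.mul_rpow hr0.le hg] at hyoung
  exact hconvex.trans (mul_le_mul_of_nonneg_left hyoung hβ)

theorem IsCarleson.integral_sum_mul_ind_rpow_le {s : Finset DyadicI} {b g : DyadicI → ℝ}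
    (hb : IsCarleson s b 1) (hb0 : ∀ J, 0 ≤ b J) (hg0 : ∀ J, 0 ≤ g J) {r : ℝ} (hr : 1 < r) :
    ∫ t in Icc (0 : ℝ) 1, (∑ J ∈ s, b J * g J * ind J t) ^ r ≤
      r ^ r * ∑ J ∈ s, g J ^ r * b J * len J := by
  have hr0 : 0 < r := by linarith
  have ha (J : DyadicI) : 0 ≤ b J * g J := mul_nonneg (hb0 J) (hg0 J)
  have h0 : (0 : ℝ) ^ r = 0 := Real.zero_rpow hr0.ne'
  let a : DyadicI → ℝ := fun J => b J * g J
  set Y := ∫ t in Icc (0 : ℝ) 1, (∑ J ∈ s, a J * ind J t) ^ r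
  have hcarleson : ∑ J ∈ s, b J * len J * sumAbove s a J ^ r ≤ Y := by
    simpa only [one_mul] using hb.sum_mul_map_sumAbove_le h0
      (fun x hx y _ hxy => Real.rpow_le_rpow hx hxy hr0.le) ha
  have hself : Y ≤ r ^ r / r * ∑ J ∈ s, g J ^ r * b J * len J + (1 - 1 / r) * Y := by
    calc Y = ∑ J ∈ s, increment (· ^ r) s a J * len J :=
          integral_map_sum_mul_ind (φ := (· ^ r)) h0 s a
      _ ≤ ∑ J ∈ s, (r ^ r / r * (g J ^ r * b J * len J) +
            (1 - 1 / r) * (b J * len J * sumAbove s a J ^ r)) := Finset.sum_le_sum fun J hJ => by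
          have hinc := mul_le_mul_of_nonneg_right (rpow_sub_sub_rpow_le hr (hb0 J) (hg0 J)
            (sumAbove_sub_nonneg ha hJ)) (len_pos J).le
          exact hinc.trans_eq (by ring)
      _ ≤ _ := by
          rw [Finset.sum_add_distrib, ← Finset.mul_sum, ← Finset.mul_sum]
          have hexp : 0 ≤ 1 - 1 / r := sub_nonneg.2 ((div_le_one hr0).2 hr.le)
          gcongr
  rw [one_sub_mul, one_div_mul_eq_div, div_mul_eq_mul_div] at hself
  exact (div_le_div_iff_of_pos_right hr0).1 (by linarith)

end CarlesonEmbedding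

/-! ### `H¹`–`BMO` duality -/

section Duality

variable {s : Finset DyadicI} {N : ℕ} {C : ℝ}

lemma HpNormS_one (s : Finset DyadicI) (a : DyadicI → ℝ) :
    HpNormS 1 s a = ∫ t in Icc (0 : ℝ) 1, sqFnS s a t := by
  simp only [HpNormS, Real.rpow_one, div_one]

lemma sq_sqFnS (s : Finset DyadicI) (a : DyadicI → ℝ) (t : ℝ) :
    sqFnS s a t ^ 2 = ∑ I ∈ s, a I ^ 2 * ind I t :=
  Real.sq_sqrt <| Finset.sum_nonneg fun I _ => mul_nonneg (sq_nonneg _) (ind_nonneg I t)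

lemma mul_le_sqrt_sub_sqrt_add {u α γ : ℝ} (hu : 0 ≤ u - α ^ 2) :
    α * γ ≤ √u - √(u - α ^ 2) + 1 / 2 * (γ ^ 2 * √u) := by
  have hle : √(u - α ^ 2) ≤ √u := Real.sqrt_le_sqrt (sub_le_self _ (sq_nonneg α))
  have hsq_u : √u ^ 2 = u := Real.sq_sqrt (by linarith [sq_nonneg α])
  have hsq_sub : √(u - α ^ 2) ^ 2 = u - α ^ 2 := Real.sq_sqrt hu
  have hy : 0 ≤ √(u - α ^ 2) := Real.sqrt_nonneg _
  generalize √u = x at *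
  generalize √(u - α ^ 2) = y at *
  have hx : 0 ≤ x := hy.trans hle
  have hα : α ^ 2 ≤ 2 * x * (x - y) := by nlinarith
  refine le_of_sq_le_sq ?_ (add_nonneg (sub_nonneg.2 hle) (by positivity))
  calc (α * γ) ^ 2 = α ^ 2 * γ ^ 2 := mul_pow α γ 2
    _ ≤ 2 * x * (x - y) * γ ^ 2 := mul_le_mul_of_nonneg_right hα (sq_nonneg γ)
    _ = 4 * (x - y) * (1 / 2 * (γ ^ 2 * x)) := by ring
    _ ≤ (x - y + 1 / 2 * (γ ^ 2 * x)) ^ 2 := four_mul_le_sq_add _ _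

theorem IsCarleson.sum_mul_mul_len_le {γ : DyadicI → ℝ}
    (hγ : IsCarleson s (fun J => γ J ^ 2) C) (α : DyadicI → ℝ) :
    ∑ J ∈ s, α J * γ J * len J ≤ (1 + C / 2) * ∫ t in Icc (0 : ℝ) 1, sqFnS s α t := by
  have hα (J : DyadicI) : 0 ≤ α J ^ 2 := sq_nonneg _
  have hcarleson : ∑ J ∈ s, γ J ^ 2 * len J * √(sumAbove s (fun J => α J ^ 2) J) ≤
      C * ∫ t in Icc (0 : ℝ) 1, sqFnS s α t :=
    hγ.sum_mul_map_sumAbove_le Real.sqrt_zero (fun _ _ _ _ hxy => Real.sqrt_le_sqrt hxy) hα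
  have htelescope : ∫ t in Icc (0 : ℝ) 1, sqFnS s α t =
      ∑ J ∈ s, increment Real.sqrt s (fun J => α J ^ 2) J * len J :=
    integral_map_sum_mul_ind Real.sqrt_zero s _
  calc ∑ J ∈ s, α J * γ J * len J
      ≤ ∑ J ∈ s, (increment Real.sqrt s (fun J => α J ^ 2) J * len J +
          1 / 2 * (γ J ^ 2 * len J * √(sumAbove s (fun J => α J ^ 2) J))) :=
        Finset.sum_le_sum fun J hJ => by
          have hterm := mul_le_mul_of_nonneg_right
            (mul_le_sqrt_sub_sqrt_add (γ := γ J) (sumAbove_sub_nonneg hα hJ)) (len_pos J).le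
          exact hterm.trans_eq (by rw [increment]; ring)
    _ ≤ _ := by
      rw [Finset.sum_add_distrib, ← Finset.mul_sum, ← htelescope]
      linarith

/-- The Haar coefficients of a function of dyadic `BMO` norm at most `1` whose pairing with
`f = ∑_{I ∈ s} a_I h_I` is `‖f‖_{H¹}`. Where the square function of `f` vanishes, the integrand is
`0⁻¹ = 0`. -/
def normingCoef (s : Finset DyadicI) (a : DyadicI → ℝ) (I : DyadicI) : ℝ :=
  a I * ⨍ t in toSet I, (sqFnS s a t)⁻¹

lemma sum_filter_mul_inv_sqFnS_sq_le_one (s : Finset DyadicI) (a : DyadicI → ℝ)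
    (P : DyadicI → Prop) (t : ℝ) :
    (∑ I ∈ s with P I, a I ^ 2 * ind I t) * (sqFnS s a t)⁻¹ ^ 2 ≤ 1 := by
  rw [inv_pow]
  refine mul_inv_le_one_of_le₀ ?_ (sq_nonneg _)
  rw [sq_sqFnS]
  exact Finset.sum_le_sum_of_subset_of_nonneg (Finset.filter_subset _ _)
    fun I _ _ => mul_nonneg (sq_nonneg _) (ind_nonneg I t)

lemma isDyadicStep_inv_sqFnS (hN : ∀ I ∈ s, I.n ≤ N) (a : DyadicI → ℝ) :
    IsDyadicStep N fun t => (sqFnS s a t)⁻¹ :=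
  (isDyadicStep_sum_mul_ind hN fun I => a I ^ 2).comp fun x => (√x)⁻¹

lemma sq_normingCoef_mul_len_le (s : Finset DyadicI) (a : DyadicI → ℝ) (I : DyadicI) :
    normingCoef s a I ^ 2 * len I ≤ a I ^ 2 * ∫ t in toSet I, (sqFnS s a t)⁻¹ ^ 2 := by
  obtain ⟨N, hN⟩ := exists_forall_level_lt s
  have hstep := isDyadicStep_inv_sqFnS (fun I hI => (hN I hI).le) a
  rw [normingCoef, mul_pow, mul_assoc, mul_comm _ (len I), ← len_mul_setAverage]
  refine mul_le_mul_of_nonneg_left (mul_le_mul_of_nonneg_left ?_ (len_pos I).le) (sq_nonneg _)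
  exact hstep.map_setAverage_le (fun t => inv_nonneg.2 (Real.sqrt_nonneg _)) (convexOn_pow 2)
    (continuous_pow 2).continuousOn I

lemma isCarleson_sq_normingCoef (s : Finset DyadicI) (a : DyadicI → ℝ) :
    IsCarleson s (fun I => normingCoef s a I ^ 2) 1 := by
  intro K
  obtain ⟨N, hN⟩ := exists_forall_level_lt s
  have hstep := (isDyadicStep_inv_sqFnS (fun I hI => (hN I hI).le) a).comp (· ^ 2)
  have hstep_sum : IsDyadicStep N fun t =>
      ∑ I ∈ s with toSet I ⊆ toSet K, a I ^ 2 * ind I t :=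
    isDyadicStep_sum_mul_ind (fun I hI => (hN I (Finset.mem_filter.1 hI).1).le) _
  calc ∑ I ∈ s with toSet I ⊆ toSet K, normingCoef s a I ^ 2 * len I
      ≤ ∑ I ∈ s with toSet I ⊆ toSet K, a I ^ 2 * ∫ t in toSet I, (sqFnS s a t)⁻¹ ^ 2 :=
        Finset.sum_le_sum fun I _ => sq_normingCoef_mul_len_le s a I
    _ = ∫ t in toSet K, (∑ I ∈ s with toSet I ⊆ toSet K, a I ^ 2 * ind I t) *
          (sqFnS s a t)⁻¹ ^ 2 :=
        sum_mul_setIntegral_toSet (fun I hI => (Finset.mem_filter.1 hI).2)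
          (hstep.integrableOn_toSet K) _
    _ ≤ ∫ _ in toSet K, (1 : ℝ) :=
        integral_mono ((hstep_sum.comp₂ hstep (· * ·)).integrableOn_toSet K)
          (integrableOn_const (by simp [volume_toSet]))
          (sum_filter_mul_inv_sqFnS_sq_le_one s a _)
    _ = 1 * len K := by simp [volume_real_toSet]

lemma integral_sqFnS_eq_sum_normingCoef (s : Finset DyadicI) (a : DyadicI → ℝ) :
    ∫ t in Icc (0 : ℝ) 1, sqFnS s a t = ∑ I ∈ s, a I * normingCoef s a I * len I := by
  obtain ⟨N, hN⟩ := exists_forall_level_lt s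
  have hstep := isDyadicStep_inv_sqFnS (fun I hI => (hN I hI).le) a
  have hterm (I : DyadicI) : a I * normingCoef s a I * len I =
      a I ^ 2 * ∫ t in toSet I, (sqFnS s a t)⁻¹ := by
    rw [← len_mul_setAverage, normingCoef]
    ring
  simp only [hterm]
  rw [sum_mul_setIntegral_toSet (fun I _ => toSet_subset_Icc I) hstep.integrableOn]
  simp only [← sq_sqFnS]
  simp only [sq, mul_self_mul_inv]

end Duality

/-! ### Transfer of packing conditions -/

section Transfer

variable {τ : DyadicI → DyadicI} {r C : ℝ} {s : Finset DyadicI} {b : DyadicI → ℝ}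

lemma le_rpow_of_rpow_le_mul {y M : ℝ} (hy : 0 ≤ y) (hM : 0 ≤ M) (hr : 1 < r)
    (h : y ^ r ≤ M * y) : y ≤ M ^ (1 / (r - 1)) := by
  obtain rfl | hy := hy.eq_or_lt
  · exact Real.rpow_nonneg hM _
  rw [one_div, Real.le_rpow_inv_iff_of_pos hy.le hM (sub_pos.2 hr), Real.rpow_sub_one hy.ne']
  exact (div_le_iff₀ hy).2 h

lemma PositiveRearrBound.integral_sum_rpow_le (h : PositiveRearrBound τ r C) (hr : 1 < r)
    (hC : 0 ≤ C) (hb0 : ∀ I, 0 ≤ b I) (hb : IsCarleson s b 1) :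
    ∫ t in Icc (0 : ℝ) 1, (∑ I ∈ s, b I * ind (τ I) t) ^ r ≤
      C * r ^ r * ∑ I ∈ s, b I * len (τ I) := by
  let g : DyadicI → ℝ := fun I => (len (τ I) / len I) ^ (1 / r)
  have hratio (I : DyadicI) : 0 ≤ len (τ I) / len I := (div_pos (len_pos _) (len_pos I)).le
  have hg0 (I : DyadicI) : 0 ≤ g I := Real.rpow_nonneg (hratio I) _
  have hcancel (I : DyadicI) : (len I / len (τ I)) ^ (1 / r) * (b I * g I) = b I := by
    rw [mul_left_comm, ← inv_div, Real.inv_rpow (hratio I), inv_mul_cancel₀, mul_one]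
    exact (Real.rpow_pos_of_pos (div_pos (len_pos _) (len_pos I)) _).ne'
  have hweight (I : DyadicI) : g I ^ r * b I * len I = b I * len (τ I) := by
    rw [← Real.rpow_mul (hratio I), one_div_mul_cancel (by linarith), Real.rpow_one, mul_right_comm,
      div_mul_cancel₀ _ (len_pos I).ne', mul_comm]
  have hτ := h s (fun I => b I * g I) fun I => mul_nonneg (hb0 I) (hg0 I)
  have hdual := hb.integral_sum_mul_ind_rpow_le hb0 hg0 hr
  simp only [hcancel] at hτ
  simp only [hweight] at hdual
  rw [mul_assoc]
  exact hτ.trans (mul_le_mul_of_nonneg_left hdual hC)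

lemma PositiveRearrBound.sum_mul_len_le (h : PositiveRearrBound τ r C) (hr : 1 < r)
    (hC : 0 ≤ C) (hb0 : ∀ I, 0 ≤ b I) (hb : IsCarleson s b 1) {K : DyadicI}
    (hK : ∀ I ∈ s, toSet (τ I) ⊆ toSet K) :
    ∑ I ∈ s, b I * len (τ I) ≤ (C * r ^ r) ^ (1 / (r - 1)) * len K := by
  set H : ℝ → ℝ := fun t => ∑ I ∈ s, b I * ind (τ I) t
  have hH0 (t : ℝ) : 0 ≤ H t :=
    Finset.sum_nonneg fun I _ => mul_nonneg (hb0 I) (ind_nonneg _ t)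
  obtain ⟨N, hN⟩ := exists_forall_level_lt (s.image τ)
  have hstep : IsDyadicStep N H := isDyadicStep_sum_mul_ind
    (fun I hI => (hN _ (Finset.mem_image_of_mem τ hI)).le) b
  have hsum : ∑ I ∈ s, b I * len (τ I) = len K * ⨍ t in toSet K, H t := by
    rw [len_mul_setAverage]
    exact sum_mul_len hK (by simp [volume_toSet]) b
  have hjensen : (⨍ t in toSet K, H t) ^ r ≤ ⨍ t in toSet K, H t ^ r :=
    hstep.map_setAverage_le hH0 (convexOn_rpow hr.le)
      (Real.continuous_rpow_const (by linarith)).continuousOn K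
  have hrpow : ⨍ t in toSet K, H t ^ r ≤ C * r ^ r * ⨍ t in toSet K, H t := by
    refine le_of_mul_le_mul_left ?_ (len_pos K)
    rw [mul_left_comm, ← hsum, len_mul_setAverage]
    exact (setIntegral_mono_set (hstep.comp (· ^ r)).integrableOn
      (ae_of_all _ fun t => Real.rpow_nonneg (hH0 t) r)
      (toSet_subset_Icc K).eventuallyLE).trans (h.integral_sum_rpow_le hr hC hb0 hb)
  rw [hsum, mul_comm]
  refine mul_le_mul_of_nonneg_right ?_ (len_pos K).le
  exact le_rpow_of_rpow_le_mul (integral_nonneg hH0) (by positivity) hr (hjensen.trans hrpow)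

theorem PositiveRearrBound.isCarleson_image (h : PositiveRearrBound τ r C)
    (hτ : Function.Injective τ) (hr : 1 < r) (hC : 0 ≤ C) (hb0 : ∀ I, 0 ≤ b I)
    (hb : IsCarleson s b 1) :
    IsCarleson (s.image τ) (fun J => b (Function.invFun τ J)) ((C * r ^ r) ^ (1 / (r - 1))) := by
  intro K
  rw [Finset.filter_image, Finset.sum_image hτ.injOn]
  simp only [Function.leftInverse_invFun hτ _]
  exact h.sum_mul_len_le hr hC hb0 (hb.mono (Finset.filter_subset _ s) hb0)
    fun I hI => (Finset.mem_filter.1 hI).2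

theorem PositiveRearrBound.h1InvOpNorm_le (h : PositiveRearrBound τ r C)
    (hτ : Function.Injective τ) (hr : 1 < r) (hC : 0 ≤ C) :
    h1InvOpNorm τ ≤ ENNReal.ofReal (1 + (C * r ^ r) ^ (1 / (r - 1)) / 2) := by
  refine iSup_le fun L => iSup_le fun a => iSup_le fun ha => ENNReal.ofReal_le_ofReal ?_
  set A : DyadicI → ℝ := fun I => len (τ I) / len I * a I
  set α : DyadicI → ℝ := fun J => ∑ I ∈ L, if τ I = J then a I else 0
  have hγ := h.isCarleson_image hτ hr hC (fun _ => sq_nonneg _) (isCarleson_sq_normingCoef L A)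
  have hpairing : ∑ I ∈ L, A I * normingCoef L A I * len I =
      ∑ J ∈ L.image τ, α J * normingCoef L A (Function.invFun τ J) * len J := by
    rw [Finset.sum_image hτ.injOn]
    refine Finset.sum_congr rfl fun I hI => ?_
    have hαI : α (τ I) = a I := sum_ite_apply_eq hτ hI a
    have hlen := (len_pos I).ne'
    rw [hαI, Function.leftInverse_invFun hτ I]
    simp only [A]
    field_simp
  rw [HpNormS_one] at ha ⊢
  rw [integral_sqFnS_eq_sum_normingCoef, hpairing]
  have hconst : 0 ≤ 1 + (C * r ^ r) ^ (1 / (r - 1)) / 2 := by positivity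
  exact (hγ.sum_mul_mul_len_le α).trans (mul_le_of_le_one_right hconst ha)

theorem h1InvOpNorm_lt_top_of_lpOpNorm_lp_lt_top (hτ : Function.Injective τ) {p : ℝ} {q : ℝ≥0∞}
    [Fact (1 ≤ q)] (hqp : q < ENNReal.ofReal p)
    (h : lpOpNorm τ p (lp (fun _ : DyadicI => ℝ) q) < ⊤) : h1InvOpNorm τ < ⊤ := by
  have hq : 0 < q.toReal := ENNReal.toReal_pos (zero_lt_one.trans_le Fact.out).ne' hqp.ne_top
  have hqp' : q.toReal < p := (ENNReal.lt_ofReal_iff_toReal_lt hqp.ne_top).1 hqp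
  have hbound := positiveRearrBound_of_lpOpNorm_lp_lt_top hτ (hq.trans hqp') hq h
  exact (hbound.h1InvOpNorm_le hτ ((one_lt_div hq).2 hqp') (by positivity)).trans_lt
    ENNReal.ofReal_lt_top

end Transfer

theorem statement12_general (p : ℝ) (hp1 : 1 < p) (τ : DyadicI → DyadicI)
    (hτ : Function.Injective τ)
    (h : ∀ (E : Type) [NormedAddCommGroup E] [NormedSpace ℝ E] [CompleteSpace E],
      IsUMD E → lpOpNorm τ p E < ⊤) :
    h1InvOpNorm τ < ⊤ := by
  obtain ⟨q, hq1, hqp⟩ := exists_between (ENNReal.one_lt_ofReal.2 hp1)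
  have : Fact (1 ≤ q) := ⟨hq1.le⟩
  have hq : 1 < q.toReal := (ENNReal.ofReal_lt_iff_lt_toReal zero_le_one hqp.ne_top).1 (by simpa)
  exact h1InvOpNorm_lt_top_of_lpOpNorm_lp_lt_top hτ hqp (h _ (isUMD_lp DyadicI hq))

/-- Let `1 < p ≤ 2` and let `τ : D → D` be injective. If for every
Banach space `E` with the UMD property the operator `T_{τ,p} ⊗ Id_E` is bounded on
`L^p_E`, then the inverse rearrangement operator is bounded on dyadic `H¹`, i.e.
`‖T_{τ,1}⁻¹‖₁ < ∞`. -/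
theorem statement12 (p : ℝ) (hp1 : 1 < p) (hp2 : p ≤ 2)
    (τ : DyadicI → DyadicI) (hτ : Function.Injective τ)
    (h : ∀ (E : Type) [NormedAddCommGroup E] [NormedSpace ℝ E] [CompleteSpace E],
      IsUMD E → lpOpNorm τ p E < ⊤) :
    h1InvOpNorm τ < ⊤ :=
  statement12_general p hp1 τ hτ h
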